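/- arXiv:2308.06576 — 14 statements merged into one kernel-verified Lean document; each statement's English description precedes it below -/
import Mathlib

section
/- For every domain G ⊊ ℝⁿ (n ≥ 2) and every constant c with 0 < c ≤ 1, the function φ̃ᶜ_G(x,y) = |x−y| / (|x−y| + c(d_G(x) + d_G(y))) is a metric on G. -/
/-- `f` is a metric on the subset `S`. -/
def IsMetricOn {E : Type*} (S : Set E) (f : E → E → ℝ) : Prop :=
  (∀ x ∈ S, ∀ y ∈ S, 0 ≤ f x y) ∧ (∀ x ∈ S, ∀ y ∈ S, (f x y = 0 ↔ x = y)) ∧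
  (∀ x ∈ S, ∀ y ∈ S, f x y = f y x) ∧
  (∀ x ∈ S, ∀ y ∈ S, ∀ z ∈ S, f x y ≤ f x z + f z y)

/-- The Euclidean distance from `x` to the boundary of `G` (equivalently, to the
complement of `G`, for open `G`). -/
noncomputable def distBd {n : ℕ} (G : Set (EuclideanSpace ℝ (Fin n)))
    (x : EuclideanSpace ℝ (Fin n)) : ℝ :=
  Metric.infDist x Gᶜ

theorem stmt2 (n : ℕ) (hn : 2 ≤ n) (G : Set (EuclideanSpace ℝ (Fin n)))
    (hopen : IsOpen G) (hconn : IsConnected G) (hproper : G ≠ Set.univ)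
    (c : ℝ) (hc0 : 0 < c) (hc1 : c ≤ 1) :
    IsMetricOn G
      (fun x y => dist x y / (dist x y + c * (distBd G x + distBd G y))) := by
  have hne : (Gᶜ).Nonempty := Set.nonempty_compl.mpr hproper
  have hpos : ∀ x ∈ G, 0 < c * distBd G x := by
    intro x hx
    refine mul_pos hc0 ?_
    exact (hopen.isClosed_compl.notMem_iff_infDist_pos hne).mp (fun h => h hx)
  have hlip : ∀ x y, c * distBd G x ≤ c * distBd G y + dist x y := by
    intro x y
    have h : distBd G x ≤ distBd G y + dist x y := Metric.infDist_le_infDist_add_dist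
    have hd : 0 ≤ dist x y := dist_nonneg
    nlinarith
  refine ⟨?_, ?_, ?_, ?_⟩
  · intro x hx y hy
    have h1 := hpos x hx
    have h2 := hpos y hy
    have hd : 0 ≤ dist x y := dist_nonneg
    simp only [mul_add]
    positivity
  · intro x hx y hy
    have h1 := hpos x hx
    have h2 := hpos y hy
    have hd : 0 ≤ dist x y := dist_nonneg
    have h3 : dist x y + c * (distBd G x + distBd G y) ≠ 0 := by
      rw [mul_add]; positivity
    simp only [div_eq_zero_iff, h3, or_false, dist_eq_zero]
  · intro x _ y _
    simp only [dist_comm x y, add_comm (distBd G x)]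
  · intro x hx y hy z hz
    have h1 := hpos x hx
    have h2 := hpos y hy
    have h3 := hpos z hz
    have l1 := hlip z x
    have l2 := hlip z y
    have t := dist_triangle x z y
    have ha : 0 ≤ dist x y := dist_nonneg
    have hp : 0 ≤ dist x z := dist_nonneg
    have hq : 0 ≤ dist z y := dist_nonneg
    rw [dist_comm z x] at l1
    simp only [mul_add]
    generalize c * distBd G x = u at *
    generalize c * distBd G y = v at *
    generalize c * distBd G z = w at *
    generalize dist x y = a at *
    generalize dist x z = p at *
    generalize dist z y = q at *
    calc a / (a + (u + v)) ≤ (p + q) / (p + q + (u + v)) := by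
          rw [div_le_div_iff₀ (by positivity) (by positivity)]
          nlinarith [mul_le_mul_of_nonneg_right t (add_pos h1 h2).le]
      _ = p / (p + q + (u + v)) + q / (p + q + (u + v)) := add_div _ _ _
      _ ≤ p / (p + (u + w)) + q / (q + (w + v)) := by
          apply add_le_add
          · exact div_le_div_of_nonneg_left hp (by positivity) (by linarith)
          · exact div_le_div_of_nonneg_left hq (by positivity) (by linarith)
end

section
/- Let G ⊊ ℝⁿ (n ≥ 2) be a domain. Suppose there exist a point q ∈ ∂G, a radius r > 0, and orthogonal unit vectors e, w ∈ ℝⁿ such that the line segment {q + t e : |t| ≤ r} is contained in the boundary ∂G and the open half-ball {x ∈ ℝⁿ : |x − q| < r and ⟨x − q, w⟩ > 0} is contained in G. Then for every c > 0 the function φ̂ᶜ_G(x,y) = log(1 + 2|x−y|/(c(d_G(x) + d_G(y)))) fails the triangle inequality: there exist x, y, z ∈ G with φ̂ᶜ_G(x,z) + φ̂ᶜ_G(z,y) < φ̂ᶜ_G(x,y). In particular, φ̂ᶜ_G is not a metric on G. -/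
open scoped RealInnerProductSpace

theorem stmt3 (n : ℕ) (hn : 2 ≤ n) (G : Set (EuclideanSpace ℝ (Fin n)))
    (hopen : IsOpen G) (hconn : IsConnected G) (hproper : G ≠ Set.univ)
    (q : EuclideanSpace ℝ (Fin n)) (hq : q ∈ frontier G)
    (r : ℝ) (hr : 0 < r) (e w : EuclideanSpace ℝ (Fin n))
    (he : ‖e‖ = 1) (hw : ‖w‖ = 1) (hew : ⟪e, w⟫ = 0)
    (hseg : ∀ t : ℝ, |t| ≤ r → q + t • e ∈ frontier G)
    (hball : ∀ x : EuclideanSpace ℝ (Fin n), dist x q < r → 0 < ⟪x - q, w⟫ → x ∈ G)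
    (c : ℝ) (hc : 0 < c) :
    (∃ x ∈ G, ∃ y ∈ G, ∃ z ∈ G,
      Real.log (1 + 2 * dist x z / (c * (distBd G x + distBd G z))) +
        Real.log (1 + 2 * dist z y / (c * (distBd G z + distBd G y))) <
        Real.log (1 + 2 * dist x y / (c * (distBd G x + distBd G y)))) ∧
    ¬ IsMetricOn G
      (fun x y => Real.log (1 + 2 * dist x y / (c * (distBd G x + distBd G y)))) := by
  have hfr : ∀ p ∈ frontier G, p ∈ Gᶜ := fun p hp hpG => by
    rw [hopen.frontier_eq] at hp
    exact hp.2 hpG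
  have hcl : IsClosed Gᶜ := hopen.isClosed_compl
  have hne : (Gᶜ).Nonempty := ⟨q, hfr q hq⟩
  have hpos : ∀ p ∈ G, 0 < distBd G p := fun p hp =>
    (hcl.notMem_iff_infDist_pos hne).1 (fun h => h hp)
  have hww : ⟪w, w⟫ = 1 := by rw [real_inner_self_eq_norm_sq, hw]; norm_num
  obtain ⟨s, hs⟩ : ∃ s, s = r / 2 := ⟨_, rfl⟩
  have hs0 : 0 < s := by linarith
  obtain ⟨ε, hε⟩ : ∃ ε, ε = c / (4 * c + 9) := ⟨_, rfl⟩
  have hε0 : 0 < ε := by rw [hε]; positivity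
  have hε1 : ε < 1 := by rw [hε, div_lt_one (by positivity)]; linarith
  have hεc : ε * (4 * c + 9) = c := by rw [hε]; field_simp
  obtain ⟨h, hh⟩ : ∃ h, h = ε * s := ⟨_, rfl⟩
  have hh0 : 0 < h := by rw [hh]; positivity
  have hhs : h < s := by rw [hh]; nlinarith
  have hnorm : ∀ a b : ℝ, ‖a • e + b • w‖ ≤ |a| + |b| := fun a b => by
    refine (norm_add_le _ _).trans ?_
    rw [norm_smul, norm_smul, he, hw]; simp
  have hG : ∀ a b : ℝ, |a| + |b| < r → 0 < b → q + (a • e + b • w) ∈ G := fun a b hab hb => by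
    apply hball
    · rw [dist_eq_norm, add_sub_cancel_left]
      exact (hnorm a b).trans_lt hab
    · rw [add_sub_cancel_left, inner_add_left, inner_smul_left, inner_smul_left, hew, hww]
      simpa using hb
  have hup : ∀ a b : ℝ, |a| ≤ r → 0 < b → distBd G (q + (a • e + b • w)) ≤ b := fun a b ha hb => by
    refine (Metric.infDist_le_dist_of_mem (hfr _ (hseg a ha))).trans ?_
    rw [dist_eq_norm]
    have : q + (a • e + b • w) - (q + a • e) = b • w := by abel
    rw [this, norm_smul, hw, Real.norm_eq_abs, abs_of_pos hb, mul_one]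
  have hsa : |s| = s := abs_of_pos hs0
  have hha : |h| = h := abs_of_pos hh0
  have hx := hG (-s) h (by rw [abs_neg, hsa, hha]; linarith) hh0
  have hy := hG s h (by rw [hsa, hha]; linarith) hh0
  have hz := hG 0 s (by rw [abs_zero, hsa]; linarith) hs0
  have hdx := hup (-s) h (by rw [abs_neg, hsa]; linarith) hh0
  have hdy := hup s h (by rw [hsa]; linarith) hh0
  have hdz : s ≤ distBd G (q + ((0:ℝ) • e + s • w)) := by
    refine (Metric.le_infDist hne).2 fun p hp => ?_
    by_contra hlt
    push Not at hlt
    apply hp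
    have hzq : dist (q + ((0:ℝ) • e + s • w)) q ≤ s := by
      rw [dist_eq_norm, add_sub_cancel_left]
      simpa [hsa] using hnorm 0 s
    apply hball
    · have := dist_triangle p (q + ((0:ℝ) • e + s • w)) q
      rw [dist_comm p (q + _)] at this
      linarith
    · have h1 : p - q = s • w - ((q + ((0:ℝ) • e + s • w)) - p) := by
        rw [zero_smul, zero_add]; abel
      have h2 := real_inner_le_norm ((q + ((0:ℝ) • e + s • w)) - p) w
      rw [hw, mul_one, ← dist_eq_norm] at h2
      rw [h1, inner_sub_left, inner_smul_left, hww]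
      simp only [conj_trivial, mul_one]
      linarith
  have hxz : dist (q + ((-s) • e + h • w)) (q + ((0:ℝ) • e + s • w)) ≤ 2 * s := by
    rw [dist_eq_norm]
    have h1 : q + ((-s) • e + h • w) - (q + ((0:ℝ) • e + s • w)) = (-s) • e + (h - s) • w := by
      module
    rw [h1]
    refine (hnorm _ _).trans ?_
    rw [abs_neg, hsa, abs_of_neg (by linarith)]; linarith
  have hzy : dist (q + ((0:ℝ) • e + s • w)) (q + (s • e + h • w)) ≤ 2 * s := by
    rw [dist_eq_norm]
    have h1 : q + ((0:ℝ) • e + s • w) - (q + (s • e + h • w)) = (-s) • e + (s - h) • w := by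
      module
    rw [h1]
    refine (hnorm _ _).trans ?_
    rw [abs_neg, hsa, abs_of_pos (by linarith)]; linarith
  have hxy : dist (q + ((-s) • e + h • w)) (q + (s • e + h • w)) = 2 * s := by
    rw [dist_eq_norm]
    have h1 : q + ((-s) • e + h • w) - (q + (s • e + h • w)) = (-(2 * s)) • e := by
      module
    rw [h1, norm_smul, he, Real.norm_eq_abs, abs_neg, abs_of_pos (by linarith), mul_one]
  have hpx := hpos _ hx
  have hpy := hpos _ hy
  have hpz := hpos _ hz
  have key : ∃ x ∈ G, ∃ y ∈ G, ∃ z ∈ G,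
      Real.log (1 + 2 * dist x z / (c * (distBd G x + distBd G z))) +
        Real.log (1 + 2 * dist z y / (c * (distBd G z + distBd G y))) <
        Real.log (1 + 2 * dist x y / (c * (distBd G x + distBd G y))) := by
    refine ⟨_, hx, _, hy, _, hz, ?_⟩
    generalize q + ((-s) • e + h • w) = x at *
    generalize q + (s • e + h • w) = y at *
    generalize q + ((0:ℝ) • e + s • w) = z at *
    have b1 : 2 * dist x z / (c * (distBd G x + distBd G z)) ≤ 4 / c := by
      rw [div_le_div_iff₀ (by positivity) hc]
      have : 0 < c * distBd G x := by positivity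
      have := mul_le_mul_of_nonneg_left hdz hc.le
      have := mul_le_mul_of_nonneg_left hxz hc.le
      linarith
    have b2 : 2 * dist z y / (c * (distBd G z + distBd G y)) ≤ 4 / c := by
      rw [div_le_div_iff₀ (by positivity) hc]
      have : 0 < c * distBd G y := by positivity
      have := mul_le_mul_of_nonneg_left hdz hc.le
      have := mul_le_mul_of_nonneg_left hzy hc.le
      linarith
    have b3 : 2 / (c * ε) ≤ 2 * dist x y / (c * (distBd G x + distBd G y)) := by
      rw [hxy, div_le_div_iff₀ (by positivity) (by positivity)]
      have : c * (distBd G x + distBd G y) ≤ c * (2 * (ε * s)) :=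
        mul_le_mul_of_nonneg_left (by linarith) hc.le
      linarith
    have b4 : (1 + 4 / c) * (1 + 4 / c) < 1 + 2 / (c * ε) := by
      have : 2 / (c * ε) = 2 * (4 * c + 9) / (c * c) := by
        rw [hε]; field_simp
      rw [this]
      have h2 : 1 + 2 * (4 * c + 9) / (c * c) = (1 + 4 / c) * (1 + 4 / c) + 2 / (c * c) := by
        field_simp; ring
      rw [h2]
      have : 0 < 2 / (c * c) := by positivity
      linarith
    have p1 : 0 ≤ 2 * dist x z / (c * (distBd G x + distBd G z)) := by positivity
    have p2 : 0 ≤ 2 * dist z y / (c * (distBd G z + distBd G y)) := by positivity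
    rw [← Real.log_mul (by positivity) (by positivity)]
    apply Real.log_lt_log (by positivity)
    refine lt_of_le_of_lt (mul_le_mul (add_le_add le_rfl b1) (add_le_add le_rfl b2)
      (by positivity) (by positivity)) ?_
    linarith
  refine ⟨key, fun hm => ?_⟩
  obtain ⟨x, hx, y, hy, z, hz, hlt⟩ := key
  exact absurd (hm.2.2.2 x hx y hy z hz) (not_le.2 hlt)
end

section
/- Let G ⊊ ℝⁿ (n ≥ 2) be a domain. Suppose there exist z ∈ G and v ∈ ℝⁿ with v ≠ 0 such that the open ball of center z and radius |v| is contained in G and both endpoints z + v and z − v of its diameter lie on the boundary ∂G. Then for every c > 0 the function φ̂ᶜ_G(x,y) = log(1 + 2|x−y|/(c(d_G(x) + d_G(y)))) fails the triangle inequality: there exist x, y, w ∈ G with φ̂ᶜ_G(x,w) + φ̂ᶜ_G(w,y) < φ̂ᶜ_G(x,y). In particular, φ̂ᶜ_G is not a metric on G. -/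
theorem distBd_aux {n : ℕ} (G : Set (EuclideanSpace ℝ (Fin n)))
    (z v : EuclideanSpace ℝ (Fin n)) (hball : Metric.ball z ‖v‖ ⊆ G)
    (hvp : z + v ∈ Gᶜ) (a : ℝ) (h0 : 0 ≤ a) (h1 : a ≤ 1) :
    distBd G (z + a • v) = (1 - a) * ‖v‖ := by
  unfold distBd
  apply le_antisymm
  · refine (Metric.infDist_le_dist_of_mem hvp).trans (le_of_eq ?_)
    have : z + a • v - (z + v) = (a - 1) • v := by module
    rw [dist_eq_norm, this, norm_smul, Real.norm_eq_abs, abs_sub_comm, abs_of_nonneg (by linarith)]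
  · refine (Metric.le_infDist ⟨_, hvp⟩).2 ?_
    intro y hy
    have h : ‖v‖ ≤ dist y z := by
      by_contra hlt
      exact hy (hball (Metric.mem_ball.2 (not_le.1 hlt)))
    have h2 : dist (z + a • v) z = a * ‖v‖ := by
      rw [dist_eq_norm, add_sub_cancel_left, norm_smul, Real.norm_eq_abs, abs_of_nonneg h0]
    have h3 := dist_triangle y (z + a • v) z
    rw [dist_comm y (z + a • v)] at h3
    linarith

theorem stmt4 (n : ℕ) (hn : 2 ≤ n) (G : Set (EuclideanSpace ℝ (Fin n)))
    (hopen : IsOpen G) (hconn : IsConnected G) (hproper : G ≠ Set.univ)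
    (z : EuclideanSpace ℝ (Fin n)) (hz : z ∈ G)
    (v : EuclideanSpace ℝ (Fin n)) (hv : v ≠ 0)
    (hball : Metric.ball z ‖v‖ ⊆ G)
    (hvp : z + v ∈ frontier G) (hvm : z - v ∈ frontier G)
    (c : ℝ) (hc : 0 < c) :
    (∃ x ∈ G, ∃ y ∈ G, ∃ w ∈ G,
      Real.log (1 + 2 * dist x w / (c * (distBd G x + distBd G w))) +
        Real.log (1 + 2 * dist w y / (c * (distBd G w + distBd G y))) <
        Real.log (1 + 2 * dist x y / (c * (distBd G x + distBd G y)))) ∧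
    ¬ IsMetricOn G
      (fun x y => Real.log (1 + 2 * dist x y / (c * (distBd G x + distBd G y)))) := by
  have main : ∃ x ∈ G, ∃ y ∈ G, ∃ w ∈ G,
      Real.log (1 + 2 * dist x w / (c * (distBd G x + distBd G w))) +
        Real.log (1 + 2 * dist w y / (c * (distBd G w + distBd G y))) <
        Real.log (1 + 2 * dist x y / (c * (distBd G x + distBd G y))) := by
    have hR : 0 < ‖v‖ := norm_pos_iff.2 hv
    have hp : z + v ∈ Gᶜ := by
      rw [hopen.frontier_eq] at hvp; exact hvp.2
    have hm : z + -v ∈ Gᶜ := by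
      rw [hopen.frontier_eq, sub_eq_add_neg] at hvm; exact hvm.2
    have hball' : Metric.ball z ‖-v‖ ⊆ G := by rwa [norm_neg]
    obtain ⟨a, ha⟩ : ∃ a : ℝ, a = (3 * c + 2) / (4 * c + 2) := ⟨_, rfl⟩
    have h0 : 0 < a := by rw [ha]; positivity
    have h1 : a < 1 := by rw [ha, div_lt_one (by positivity)]; linarith
    have dx := distBd_aux G z (-v) hball' hm a h0.le h1.le
    have dy := distBd_aux G z v hball hp a h0.le h1.le
    have dz := distBd_aux G z v hball hp 0 le_rfl zero_le_one
    rw [norm_neg] at dx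
    rw [zero_smul, add_zero, sub_zero, one_mul] at dz
    have e1 : dist (z + a • (-v)) z = a * ‖v‖ := by
      rw [dist_eq_norm, add_sub_cancel_left, norm_smul, norm_neg, Real.norm_eq_abs,
        abs_of_pos h0]
    have e2 : dist z (z + a • v) = a * ‖v‖ := by
      rw [dist_comm, dist_eq_norm, add_sub_cancel_left, norm_smul, Real.norm_eq_abs,
        abs_of_pos h0]
    have e3 : dist (z + a • (-v)) (z + a • v) = 2 * a * ‖v‖ := by
      have : z + a • (-v) - (z + a • v) = (-(2 * a)) • v := by module
      rw [dist_eq_norm, this, norm_smul, norm_neg, Real.norm_eq_abs, abs_of_pos (by linarith)]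
    have haR : a * ‖v‖ < ‖v‖ := by nlinarith
    refine ⟨z + a • (-v), hball ?_, z + a • v, hball ?_, z, hz, ?_⟩
    · rw [Metric.mem_ball, e1]; exact haR
    · rw [Metric.mem_ball, dist_comm, e2]; exact haR
    · rw [e1, e2, e3, dx, dy, dz]
      have q1 : 2 * (a * ‖v‖) / (c * ((1 - a) * ‖v‖ + ‖v‖)) = 2 * a / (c * (2 - a)) := by
        have : (1 - a) * ‖v‖ + ‖v‖ = (2 - a) * ‖v‖ := by ring
        rw [this, ← mul_assoc, ← mul_assoc, mul_div_mul_right _ _ hR.ne']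
      have q2 : 2 * (2 * a * ‖v‖) / (c * ((1 - a) * ‖v‖ + (1 - a) * ‖v‖))
          = 2 * a / (c * (1 - a)) := by
        have h3 : 1 - a ≠ 0 := by linarith
        field_simp
        ring
      rw [add_comm ‖v‖, q1, q2]
      have h2 : 2 * a / (c * (2 - a)) ≤ 2 / c := by
        rw [div_le_div_iff₀ (by apply mul_pos <;> linarith) hc]
        nlinarith
      have hnn : 0 < 2 * a / (c * (2 - a)) := by
        apply div_pos (by linarith)
        apply mul_pos <;> linarith
      have h4 : 2 * a / (c * (1 - a)) = 2 * (3 * c + 2) / c ^ 2 := by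
        have : 1 - a = c / (4 * c + 2) := by rw [ha]; field_simp; ring
        rw [this, ha]
        field_simp
      rw [h4, ← Real.log_mul (by linarith) (by linarith)]
      apply Real.log_lt_log (by nlinarith)
      have h5 : (1 + 2 / c) * (1 + 2 / c) < 1 + 2 * (3 * c + 2) / c ^ 2 := by
        have : 1 + 2 * (3 * c + 2) / c ^ 2 = (1 + 2 / c) * (1 + 2 / c) + 2 / c := by
          field_simp
          ring
        rw [this]
        have : 0 < 2 / c := by positivity
        linarith
      nlinarith
  refine ⟨main, ?_⟩
  rintro ⟨-, -, -, h⟩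
  obtain ⟨x, hx, y, hy, w, hw, hlt⟩ := main
  exact absurd (h x hx y hy w hw) (not_le.2 hlt)
end

section
/- Let G = ℝⁿ \ {0} with n ≥ 2, so that d_G(x) = |x| for x ∈ G. For every c > 0, each of the three functions φᶜ_G(x,y) = 2|x−y|/(c(|x| + |y|)), φ̂ᶜ_G(x,y) = log(1 + 2|x−y|/(c(|x| + |y|))), and φ̃ᶜ_G(x,y) = |x−y|/(|x−y| + c(|x| + |y|)) is a metric on ℝⁿ \ {0}. -/
theorem key_aux (p q r a b d s : ℝ) (hp : 0 < p) (hq : 0 < q) (hr : 0 < r) (hs : 0 < s)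
    (hb : 0 ≤ b) (hd : 0 ≤ d) (h1 : a ≤ b + d) (h2 : a * r ≤ b * q + d * p)
    (e1 : (s + q) * (p + r) ≤ (p + q) * (s + r)) (e2 : (s + p) * (r + q) ≤ (p + q) * (s + r)) :
    a / (p + q) ≤ b / (p + r) + d / (r + q) := by
  have h3 : a * (s + r) ≤ b * (s + q) + d * (s + p) := by nlinarith
  have h4 : (s + q) / ((s + r) * (p + q)) ≤ 1 / (p + r) := by
    rw [div_le_div_iff₀ (by positivity) (by positivity)]; linarith
  have h5 : (s + p) / ((s + r) * (p + q)) ≤ 1 / (r + q) := by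
    rw [div_le_div_iff₀ (by positivity) (by positivity)]; linarith
  calc a / (p + q) = a * (s + r) / ((s + r) * (p + q)) := by field_simp
    _ ≤ (b * (s + q) + d * (s + p)) / ((s + r) * (p + q)) := by gcongr
    _ = b * ((s + q) / ((s + r) * (p + q))) + d * ((s + p) / ((s + r) * (p + q))) := by ring
    _ ≤ b * (1 / (p + r)) + d * (1 / (r + q)) := by gcongr
    _ = _ := by ring

theorem key (p q r a b d : ℝ) (hp : 0 < p) (hq : 0 < q) (hr : 0 < r)
    (hb : 0 ≤ b) (hd : 0 ≤ d) (h1 : a ≤ b + d) (h2 : a * r ≤ b * q + d * p) :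
    a / (p + q) ≤ b / (p + r) + d / (r + q) := by
  rcases le_total q p with h | h
  · rcases le_total r p with h' | h'
    · exact key_aux p q r a b d p hp hq hr hp hb hd h1 h2 (by nlinarith) (by nlinarith)
    · exact key_aux p q r a b d q hp hq hr hq hb hd h1 h2 (by nlinarith) (by nlinarith)
  · rcases le_total r q with h' | h'
    · exact key_aux p q r a b d q hp hq hr hq hb hd h1 h2 (by nlinarith) (by nlinarith)
    · exact key_aux p q r a b d p hp hq hr hp hb hd h1 h2 (by nlinarith) (by nlinarith)

theorem metric_log {E : Type*} {S : Set E} {f : E → E → ℝ} (h : IsMetricOn S f) :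
    IsMetricOn S (fun x y => Real.log (1 + f x y)) := by
  obtain ⟨h0, h1, h2, h3⟩ := h
  refine ⟨fun x hx y hy => Real.log_nonneg (by linarith [h0 x hx y hy]), fun x hx y hy => ?_,
    fun x hx y hy => by simp only [h2 x hx y hy], fun x hx y hy z hz => ?_⟩
  · rw [← h1 x hx y hy]
    have := h0 x hx y hy
    constructor
    · intro h
      rcases Real.log_eq_zero.mp h with h | h | h <;> linarith
    · intro h
      simp [h]
  · have a := h0 x hx y hy
    have b := h0 x hx z hz
    have d := h0 z hz y hy
    have t := h3 x hx y hy z hz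
    simp only
    rw [← Real.log_mul (by positivity) (by positivity)]
    apply Real.log_le_log (by positivity)
    nlinarith [mul_nonneg b d]

theorem metric_frac {E : Type*} {S : Set E} {f : E → E → ℝ} (h : IsMetricOn S f) :
    IsMetricOn S (fun x y => f x y / (f x y + 2)) := by
  obtain ⟨h0, h1, h2, h3⟩ := h
  refine ⟨fun x hx y hy => ?_, fun x hx y hy => ?_,
    fun x hx y hy => by simp only [h2 x hx y hy], fun x hx y hy z hz => ?_⟩
  · have := h0 x hx y hy
    positivity
  · rw [← h1 x hx y hy]
    have := h0 x hx y hy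
    have h' : f x y + 2 ≠ 0 := by positivity
    simp [h']
  · have a := h0 x hx y hy
    have b := h0 x hx z hz
    have d := h0 z hz y hy
    have t := h3 x hx y hy z hz
    simp only
    generalize f x y = u at *
    generalize f x z = v at *
    generalize f z y = w at *
    calc u / (u + 2) ≤ (v + w) / (v + w + 2) := by
          rw [div_le_div_iff₀ (by positivity) (by positivity)]; nlinarith
      _ = v / (v + w + 2) + w / (v + w + 2) := by ring
      _ ≤ v / (v + 2) + w / (w + 2) := by
          gcongr <;> linarith

theorem metric_base (n : ℕ) (c : ℝ) (hc : 0 < c) :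
    IsMetricOn {x : EuclideanSpace ℝ (Fin n) | x ≠ 0}
      (fun x y => 2 * dist x y / (c * (‖x‖ + ‖y‖))) := by
  refine ⟨fun x hx y hy => by positivity, fun x hx y hy => ?_, fun x hx y hy => ?_,
    fun x hx y hy z hz => ?_⟩
  · have hx' : 0 < ‖x‖ := norm_pos_iff.mpr hx
    have : c * (‖x‖ + ‖y‖) ≠ 0 := by positivity
    simp only [div_eq_zero_iff, this, or_false]
    simp
  · simp only [dist_comm x y, add_comm ‖x‖]
  · have hx' : 0 < ‖x‖ := norm_pos_iff.mpr hx
    have hy' : 0 < ‖y‖ := norm_pos_iff.mpr hy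
    have hz' : 0 < ‖z‖ := norm_pos_iff.mpr hz
    have pt := EuclideanGeometry.mul_dist_le_mul_dist_add_mul_dist x z y 0
    simp only [dist_zero_right] at pt
    have k := key ‖x‖ ‖y‖ ‖z‖ (dist x y) (dist x z) (dist z y) hx' hy' hz' dist_nonneg
      dist_nonneg (dist_triangle _ _ _) pt
    have k2 := mul_le_mul_of_nonneg_left k (show 0 ≤ 2 / c by positivity)
    simp only [mul_div_mul_comm, mul_add] at k2 ⊢
    simpa only [← mul_add, mul_div_mul_comm] using k2

theorem stmt5 (n : ℕ) (hn : 2 ≤ n) (c : ℝ) (hc : 0 < c) :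
    IsMetricOn {x : EuclideanSpace ℝ (Fin n) | x ≠ 0}
      (fun x y => 2 * dist x y / (c * (‖x‖ + ‖y‖))) ∧
    IsMetricOn {x : EuclideanSpace ℝ (Fin n) | x ≠ 0}
      (fun x y => Real.log (1 + 2 * dist x y / (c * (‖x‖ + ‖y‖)))) ∧
    IsMetricOn {x : EuclideanSpace ℝ (Fin n) | x ≠ 0}
      (fun x y => dist x y / (dist x y + c * (‖x‖ + ‖y‖))) := by
  have hb := metric_base n c hc
  refine ⟨hb, metric_log hb, ?_⟩
  have e : ∀ x ∈ {x : EuclideanSpace ℝ (Fin n) | x ≠ 0}, ∀ y ∈ {x : EuclideanSpace ℝ (Fin n) | x ≠ 0},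
      dist x y / (dist x y + c * (‖x‖ + ‖y‖)) =
      (2 * dist x y / (c * (‖x‖ + ‖y‖))) / (2 * dist x y / (c * (‖x‖ + ‖y‖)) + 2) := by
    intro x hx y hy
    have hx' : 0 < ‖x‖ := norm_pos_iff.mpr hx
    have hS : 0 < c * (‖x‖ + ‖y‖) := by positivity
    have hD : 0 ≤ dist x y := dist_nonneg
    generalize c * (‖x‖ + ‖y‖) = S at *
    generalize dist x y = D at *
    have : D + S ≠ 0 := by positivity
    field_simp
  obtain ⟨h0, h1, h2, h3⟩ := metric_frac hb
  refine ⟨fun x hx y hy => ?_, fun x hx y hy => ?_, fun x hx y hy => ?_, fun x hx y hy z hz => ?_⟩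
  · simp only [e x hx y hy]; exact h0 x hx y hy
  · simp only [e x hx y hy]; exact h1 x hx y hy
  · simp only [e x hx y hy, e y hy x hx]; exact h2 x hx y hy
  · simp only [e x hx y hy, e x hx z hz, e z hz y hy]; exact h3 x hx y hy z hz
end

section
/- Let n ≥ 2 and let c, d > 0 be constants. The function φ^{c,d}(x,y) = |x−y| / (c·((|x|^d + |y|^d)/2)^{1/d}) is a metric on ℝⁿ \ {0} if and only if d ≥ 1/3. -/
open Real Set

/-- The hyperbolic profile of the metric. -/
noncomputable def HH (d v : ℝ) : ℝ := sinh v * cosh (d * v) ^ (-(1 / d))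

/-- The power mean. -/
noncomputable def PM (d a b : ℝ) : ℝ := ((a ^ d + b ^ d) / 2) ^ (1 / d)

lemma HH_zero (d : ℝ) : HH d 0 = 0 := by simp [HH]

lemma cosh_mul_hasDeriv (k v : ℝ) : HasDerivAt (fun v => cosh (k * v)) (k * sinh (k * v)) v := by
  have h1 : HasDerivAt (fun v : ℝ => k * v) k v := by simpa using (hasDerivAt_id v).const_mul k
  have := (Real.hasDerivAt_cosh (k * v)).comp v h1
  exact this.congr_deriv (by ring)

lemma sinh_mul_hasDeriv (k v : ℝ) : HasDerivAt (fun v => sinh (k * v)) (k * cosh (k * v)) v := by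
  have h1 : HasDerivAt (fun v : ℝ => k * v) k v := by simpa using (hasDerivAt_id v).const_mul k
  have := (Real.hasDerivAt_sinh (k * v)).comp v h1
  exact this.congr_deriv (by ring)

lemma cosh_rpow_hasDeriv (d p v : ℝ) : HasDerivAt (fun v => cosh (d * v) ^ p)
    (d * sinh (d * v) * p * cosh (d * v) ^ (p - 1)) v :=
  (cosh_mul_hasDeriv d v).rpow_const (Or.inl (cosh_pos _).ne')

lemma HH_hasDeriv (d : ℝ) (hd : 0 < d) (v : ℝ) :
    HasDerivAt (HH d) (cosh ((1 - d) * v) * cosh (d * v) ^ (-(1 / d) - 1)) v := by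
  have h := (Real.hasDerivAt_sinh v).mul (cosh_rpow_hasDeriv d (-(1 / d)) v)
  refine HasDerivAt.congr_deriv h ?_
  have e : cosh (d * v) ^ (-(1 / d)) = cosh (d * v) ^ (-(1 / d) - 1) * cosh (d * v) := by
    rw [← Real.rpow_add_one (cosh_pos _).ne']; congr 1; ring
  have e2 : cosh ((1 - d) * v) = cosh v * cosh (d * v) - sinh v * sinh (d * v) := by
    rw [← Real.cosh_sub]; congr 1; ring
  rw [e, e2]
  field_simp
  ring

lemma HH_hasDeriv2 (d : ℝ) (hd : 0 < d) (v : ℝ) :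
    HasDerivAt (fun v => cosh ((1 - d) * v) * cosh (d * v) ^ (-(1 / d) - 1))
      ((sinh ((1 - 2 * d) * v) - d * sinh v) * cosh (d * v) ^ (-(1 / d) - 2)) v := by
  have h := (cosh_mul_hasDeriv (1 - d) v).mul (cosh_rpow_hasDeriv d (-(1 / d) - 1) v)
  refine HasDerivAt.congr_deriv h ?_
  have e : cosh (d * v) ^ (-(1 / d) - 1) = cosh (d * v) ^ (-(1 / d) - 2) * cosh (d * v) := by
    rw [← Real.rpow_add_one (cosh_pos _).ne']; congr 1; ring
  have e' : cosh (d * v) ^ (-(1 / d) - 1 - 1) = cosh (d * v) ^ (-(1 / d) - 2) := by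
    congr 1; ring
  have e2 : sinh v = sinh ((1 - d) * v) * cosh (d * v) + cosh ((1 - d) * v) * sinh (d * v) := by
    rw [← Real.sinh_add]; congr 1; ring
  have e3 : sinh ((1 - 2 * d) * v) =
      sinh ((1 - d) * v) * cosh (d * v) - cosh ((1 - d) * v) * sinh (d * v) := by
    rw [← Real.sinh_sub]; congr 1; ring
  rw [e', e, e2, e3]
  field_simp
  ring

lemma sinh_scale (l v : ℝ) (hl0 : 0 ≤ l) (hl : l ≤ 1) (hv : 0 ≤ v) :
    sinh (l * v) ≤ l * sinh v := by
  have hm : MonotoneOn (fun v => l * sinh v - sinh (l * v)) (Ici 0) := by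
    have hD : ∀ v, HasDerivAt (fun v => l * sinh v - sinh (l * v))
        (l * cosh v - l * cosh (l * v)) v := fun v =>
      ((Real.hasDerivAt_sinh v).const_mul l).sub (sinh_mul_hasDeriv l v)
    refine monotoneOn_of_deriv_nonneg (convex_Ici 0)
      (fun x _ => (hD x).continuousAt.continuousWithinAt)
      (fun x _ => (hD x).differentiableAt.differentiableWithinAt) ?_
    intro x hx
    rw [interior_Ici] at hx
    have hx : 0 < x := hx
    rw [(hD x).deriv]
    have : cosh (l * x) ≤ cosh x := by
      rw [Real.cosh_le_cosh, abs_of_nonneg (by positivity), abs_of_pos hx]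
      nlinarith
    nlinarith
  have := hm (mem_Ici.2 le_rfl) (mem_Ici.2 hv) hv
  simp at this
  linarith

lemma HH_concave (d : ℝ) (hd : 1 / 3 ≤ d) : ConcaveOn ℝ (Ici 0) (HH d) := by
  have hd0 : 0 < d := by linarith
  have hde : deriv (HH d) = fun v => cosh ((1 - d) * v) * cosh (d * v) ^ (-(1 / d) - 1) :=
    funext fun v => (HH_hasDeriv d hd0 v).deriv
  refine AntitoneOn.concaveOn_of_deriv (convex_Ici 0)
    (fun x _ => (HH_hasDeriv d hd0 x).continuousAt.continuousWithinAt)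
    (fun x _ => (HH_hasDeriv d hd0 x).differentiableAt.differentiableWithinAt) ?_
  rw [hde]
  refine antitoneOn_of_deriv_nonpos (convex_Ici (0:ℝ)).interior
    (fun x _ => (HH_hasDeriv2 d hd0 x).continuousAt.continuousWithinAt)
    (fun x _ => (HH_hasDeriv2 d hd0 x).differentiableAt.differentiableWithinAt) ?_
  intro x hx
  simp only [interior_Ici, interior_Ioi, mem_Ioi] at hx
  rw [(HH_hasDeriv2 d hd0 x).deriv]
  have hs : 0 < sinh x := Real.sinh_pos_iff.2 hx
  apply mul_nonpos_of_nonpos_of_nonneg _ (rpow_nonneg (cosh_pos _).le _)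
  rcases le_total (1 / 2) d with h | h
  · have : sinh ((1 - 2 * d) * x) ≤ 0 := by
      rw [Real.sinh_nonpos_iff]; nlinarith
    nlinarith
  · have := sinh_scale (1 - 2 * d) x (by linarith) (by linarith) hx.le
    nlinarith

lemma HH_subadd (d : ℝ) (hd : 1 / 3 ≤ d) (p q : ℝ) (hp : 0 < p) (hq : 0 < q) :
    HH d (p + q) ≤ HH d p + HH d q := by
  have hc := (HH_concave d hd).2
  have h1 := hc (mem_Ici.2 (add_pos hp hq).le) (mem_Ici.2 (le_refl (0:ℝ)))
    (a := p / (p + q)) (b := q / (p + q)) (by positivity) (by positivity) (by field_simp)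
  have h2 := hc (mem_Ici.2 (add_pos hp hq).le) (mem_Ici.2 (le_refl (0:ℝ)))
    (a := q / (p + q)) (b := p / (p + q)) (by positivity) (by positivity)
    (by field_simp; ring)
  simp only [HH_zero, smul_eq_mul, mul_zero, add_zero] at h1 h2
  rw [div_mul_cancel₀ _ (by positivity)] at h1 h2
  have : HH d (p + q) = p / (p + q) * HH d (p + q) + q / (p + q) * HH d (p + q) := by
    field_simp
  linarith

lemma PM_exp (d α β : ℝ) (hd : 0 < d) :
    PM d (exp α) (exp β) = exp ((α + β) / 2) * cosh (d * ((β - α) / 2)) ^ (1 / d) := by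
  have : (exp α ^ d + exp β ^ d) / 2 = exp ((α + β) / 2) ^ d * cosh (d * ((β - α) / 2)) := by
    rw [← Real.exp_mul, ← Real.exp_mul, ← Real.exp_mul, Real.cosh_eq]
    rw [mul_div_assoc', mul_add, ← Real.exp_add, ← Real.exp_add, add_comm]
    congr 3 <;> ring
  rw [PM, this, Real.mul_rpow (by positivity) (cosh_pos _).le, ← Real.rpow_mul (by positivity),
    mul_one_div_cancel hd.ne', Real.rpow_one]

lemma f_exp (d α β : ℝ) (hd : 0 < d) :
    (exp β - exp α) / PM d (exp α) (exp β) = 2 * HH d ((β - α) / 2) := by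
  have : exp β - exp α = 2 * exp ((α + β) / 2) * sinh ((β - α) / 2) := by
    rw [Real.sinh_eq]
    have e1 : exp β = exp ((α + β) / 2) * exp ((β - α) / 2) := by
      rw [← Real.exp_add]; congr 1; ring
    have e2 : exp α = exp ((α + β) / 2) * exp (-((β - α) / 2)) := by
      rw [← Real.exp_add]; congr 1; ring
    rw [e1, e2]; ring
  have hc : 0 < cosh (d * ((β - α) / 2)) ^ (1 / d) := rpow_pos_of_pos (cosh_pos _) _
  rw [this, PM_exp d α β hd, HH, Real.rpow_neg (cosh_pos _).le]
  have := (exp_pos ((α + β) / 2)).ne'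
  field_simp

lemma PM_pos (d a b : ℝ) (ha : 0 < a) (hb : 0 < b) : 0 < PM d a b := by
  unfold PM; positivity

lemma PM_comm (d a b : ℝ) : PM d a b = PM d b a := by
  unfold PM; rw [add_comm]

lemma PM_mono (d a b b' : ℝ) (hd : 0 < d) (ha : 0 < a) (hb : 0 < b) (h : b ≤ b') :
    PM d a b ≤ PM d a b' := by
  unfold PM
  have : 0 < b' := by linarith
  gcongr

lemma PM_smul (d k a b : ℝ) (hd : 0 < d) (hk : 0 < k) (ha : 0 < a) (hb : 0 < b) :
    PM d (k * a) (k * b) = k * PM d a b := by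
  unfold PM
  rw [Real.mul_rpow hk.le ha.le, Real.mul_rpow hk.le hb.le, ← mul_add, mul_div_assoc,
    Real.mul_rpow (by positivity) (by positivity), ← Real.rpow_mul hk.le,
    mul_one_div_cancel hd.ne', Real.rpow_one]

/-- `M(a,t)/t` is decreasing in `t`. -/
lemma PM_mod (d a b t : ℝ) (hd : 0 < d) (ha : 0 < a) (hb : 0 < b) (h : b ≤ t) :
    b * PM d a t ≤ t * PM d a b := by
  have ht : 0 < t := by linarith
  rw [← PM_smul d b a t hd hb ha ht, ← PM_smul d t a b hd ht ha hb, mul_comm b t,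
    PM_comm d (b * a), PM_comm d (t * a)]
  exact PM_mono d _ _ _ hd (by positivity) (by positivity) (by gcongr)

lemma line_ineq (d a t b : ℝ) (hd : 1 / 3 ≤ d) (ha : 0 < a) (h1 : a < t) (h2 : t < b) :
    (b - a) / PM d a b ≤ (t - a) / PM d a t + (b - t) / PM d t b := by
  have hd0 : 0 < d := by linarith
  have ht : 0 < t := by linarith
  have hb : 0 < b := by linarith
  have l1 := Real.log_lt_log ha h1
  have l2 := Real.log_lt_log ht h2
  rw [← Real.exp_log ha, ← Real.exp_log hb, ← Real.exp_log ht, f_exp _ _ _ hd0, f_exp _ _ _ hd0,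
    f_exp _ _ _ hd0]
  have := HH_subadd d hd ((log t - log a) / 2) ((log b - log t) / 2) (by linarith) (by linarith)
  rw [show (log t - log a) / 2 + (log b - log t) / 2 = (log b - log a) / 2 by ring] at this
  linarith

/-- Triangle inequality from the numerical data: `w = |x-y|`, `u = |x-z|`, `v = |z-y|`. -/
lemma tri_aux (d a b t u v w : ℝ) (hd : 1 / 3 ≤ d) (ha : 0 < a) (hb : 0 < b) (ht : 0 < t)
    (hab : a ≤ b) (hu : 0 ≤ u) (hv : 0 ≤ v) (hw : w ≤ u + v) (hpt : w * t ≤ u * b + v * a) :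
    w / PM d a b ≤ u / PM d a t + v / PM d t b := by
  have hd0 : 0 < d := by linarith
  have pab := PM_pos d a b ha hb
  have pat := PM_pos d a t ha ht
  have ptb := PM_pos d t b ht hb
  rcases le_or_gt t a with h | h
  · have m1 : PM d a t ≤ PM d a b := PM_mono d _ _ _ hd0 ha ht (by linarith)
    have m2 : PM d t b ≤ PM d a b := by
      rw [PM_comm d t, PM_comm d a]; exact PM_mono d _ _ _ hd0 hb ht h
    calc w / PM d a b ≤ (u + v) / PM d a b := by gcongr
      _ = u / PM d a b + v / PM d a b := add_div _ _ _
      _ ≤ _ := by gcongr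
  rcases le_or_gt b t with h' | h'
  · have m1 := PM_mod d a b t hd0 ha hb h'
    have m2 := PM_mod d b a t hd0 hb ha (by linarith)
    rw [PM_comm d b t, PM_comm d b a] at m2
    calc w / PM d a b = (w * t) / (t * PM d a b) := by field_simp
      _ ≤ (u * b + v * a) / (t * PM d a b) := by gcongr
      _ = u * b / (t * PM d a b) + v * a / (t * PM d a b) := add_div _ _ _
      _ ≤ u * b / (b * PM d a t) + v * a / (a * PM d t b) := by gcongr
      _ = _ := by field_simp
  · have L := line_ineq d a t b hd ha h h'
    have m1 : PM d a b ≤ PM d t b := by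
      rw [PM_comm d t, PM_comm d a]; exact PM_mono d _ _ _ hd0 hb ha h.le
    have m2 := PM_mod d b a t hd0 hb ha h.le
    rw [PM_comm d b t, PM_comm d b a] at m2
    simp only [div_eq_mul_inv] at L ⊢
    have hA : 0 < (PM d a b)⁻¹ := inv_pos.2 pab
    have hCA : (PM d t b)⁻¹ ≤ (PM d a b)⁻¹ := by gcongr
    have hCt : a * (PM d a b)⁻¹ ≤ t * (PM d t b)⁻¹ := by
      rw [← div_eq_mul_inv, ← div_eq_mul_inv, div_le_div_iff₀ pab ptb]; exact m2
    generalize (PM d a b)⁻¹ = A at *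
    generalize (PM d a t)⁻¹ = B at *
    generalize (PM d t b)⁻¹ = C at *
    -- weights: (A*(t-a)) = (t*C - a*A) + t*(A-C)
    have k1 : (t * C - a * A) * w ≤ (t * C - a * A) * (u + v) :=
      mul_le_mul_of_nonneg_left hw (by linarith)
    have k2 : (A - C) * (w * t) ≤ (A - C) * (u * b + v * a) :=
      mul_le_mul_of_nonneg_left hpt (by linarith)
    have k3 : u * ((b - a) * A) ≤ u * ((t - a) * B + (b - t) * C) :=
      mul_le_mul_of_nonneg_left L hu
    have hta : 0 < t - a := by linarith
    refine le_of_mul_le_mul_left ?_ hta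
    nlinarith

lemma tri (d a b t u v w : ℝ) (hd : 1 / 3 ≤ d) (ha : 0 < a) (hb : 0 < b) (ht : 0 < t)
    (hu : 0 ≤ u) (hv : 0 ≤ v) (hw : w ≤ u + v) (hpt : w * t ≤ u * b + v * a) :
    w / PM d a b ≤ u / PM d a t + v / PM d t b := by
  rcases le_total a b with h | h
  · exact tri_aux d a b t u v w hd ha hb ht h hu hv hw hpt
  · have := tri_aux d b a t v u w hd hb ha ht h hv hu (by linarith) (by linarith)
    rw [PM_comm d a b, PM_comm d a t, PM_comm d t b]
    linarith

lemma necessity (d : ℝ) (hd : 0 < d) (h : ∀ w, 0 < w → HH d (2 * w) ≤ 2 * HH d w) :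
    1 / 3 ≤ d := by
  by_contra! hlt
  set s := (1 - 3 * d) / (4 * d) with hs
  have hs0 : 0 < s := div_pos (by linarith) (by linarith)
  have hsd : s * (4 * d) = 1 - 3 * d := by rw [hs]; field_simp
  have hw := Real.sqrt_pos.2 hs0
  have hw2 := Real.sq_sqrt hs0.le
  set w := √s
  have H := h w hw
  have hsw : 0 < sinh w := Real.sinh_pos_iff.2 hw
  unfold HH at H
  rw [Real.sinh_two_mul] at H
  have H1 : cosh w * cosh (d * (2 * w)) ^ (-(1 / d)) ≤ cosh (d * w) ^ (-(1 / d)) := by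
    have : 0 < 2 * sinh w := by linarith
    refine le_of_mul_le_mul_left ?_ this
    linarith
  have c1 := cosh_pos w
  have c2 := cosh_pos (d * w)
  have c3 := cosh_pos (d * (2 * w))
  have H2 := Real.log_le_log (mul_pos c1 (rpow_pos_of_pos c3 _)) H1
  rw [Real.log_mul c1.ne' (rpow_pos_of_pos c3 _).ne', Real.log_rpow c3, Real.log_rpow c2] at H2
  have H3 : d * log (cosh w) + log (cosh (d * w)) ≤ log (cosh (d * (2 * w))) := by
    have := mul_le_mul_of_nonneg_left H2 hd.le
    have e : d * (1 / d) = 1 := mul_one_div_cancel hd.ne'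
    linear_combination this + (log (cosh (d * (2 * w))) - log (cosh (d * w))) * e
  have U : log (cosh (d * (2 * w))) ≤ 2 * d ^ 2 * s := by
    rw [Real.log_le_iff_le_exp c3]
    refine (Real.cosh_le_exp_half_sq _).trans (le_of_eq ?_)
    congr 1
    rw [← hw2]; ring
  have key : ∀ x : ℝ, 0 ≤ x → x ^ 2 ≤ s → x ^ 2 / 2 / (1 + s / 2) ≤ log (cosh x) := by
    intro x hx hxs
    have hc : 1 + x ^ 2 / 2 ≤ cosh x := by
      have e : cosh x = 1 + 2 * sinh (x / 2) ^ 2 := by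
        have := Real.cosh_two_mul (x / 2)
        rw [Real.cosh_sq, show 2 * (x / 2) = x by ring] at this
        linarith
      have : x / 2 ≤ sinh (x / 2) := Real.self_le_sinh_iff.2 (by linarith)
      nlinarith
    have hp : 0 < 1 + x ^ 2 / 2 := by positivity
    calc x ^ 2 / 2 / (1 + s / 2) ≤ x ^ 2 / 2 / (1 + x ^ 2 / 2) := by gcongr
      _ = 1 - (1 + x ^ 2 / 2)⁻¹ := by field_simp; ring
      _ ≤ log (1 + x ^ 2 / 2) := Real.one_sub_inv_le_log_of_pos hp
      _ ≤ _ := Real.log_le_log hp hc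
  have K1 := key w hw.le hw2.le
  have K2 := key (d * w) (by positivity) (by rw [mul_pow, hw2]; nlinarith)
  rw [hw2] at K1
  rw [mul_pow, hw2] at K2
  have F : d * (s / 2 / (1 + s / 2)) + d ^ 2 * s / 2 / (1 + s / 2) ≤ 2 * d ^ 2 * s := by
    nlinarith
  have hp : 0 < 1 + s / 2 := by positivity
  have F2 : d * s * (1 + d) ≤ d * s * (4 * d * (1 + s / 2)) := by
    have := mul_le_mul_of_nonneg_right F hp.le
    rw [add_mul, mul_assoc, div_mul_cancel₀ _ hp.ne', div_mul_cancel₀ _ hp.ne'] at this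
    linarith
  have F3 := le_of_mul_le_mul_left F2 (by positivity)
  nlinarith

theorem stmt6 (n : ℕ) (hn : 2 ≤ n) (c d : ℝ) (hc : 0 < c) (hd : 0 < d) :
    IsMetricOn {x : EuclideanSpace ℝ (Fin n) | x ≠ 0}
      (fun x y => dist x y / (c * ((‖x‖ ^ d + ‖y‖ ^ d) / 2) ^ (1 / d))) ↔
    1 / 3 ≤ d := by
  have hf : (fun x y : EuclideanSpace ℝ (Fin n) =>
      dist x y / (c * ((‖x‖ ^ d + ‖y‖ ^ d) / 2) ^ (1 / d))) =
      fun x y => dist x y / (c * PM d ‖x‖ ‖y‖) := rfl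
  rw [hf]
  constructor
  · rintro ⟨-, -, -, h⟩
    refine necessity d hd fun w hw => ?_
    let e : EuclideanSpace ℝ (Fin n) := EuclideanSpace.single ⟨0, by omega⟩ 1
    have he : ‖e‖ = 1 := by simp [e]
    have he0 : e ≠ 0 := by rw [← norm_pos_iff, he]; norm_num
    have hnz : ∀ α : ℝ, exp α • e ∈ {x : EuclideanSpace ℝ (Fin n) | x ≠ 0} := fun α =>
      smul_ne_zero (exp_pos α).ne' he0
    have hn : ∀ α : ℝ, ‖exp α • e‖ = exp α := fun α => by
      rw [norm_smul, he, mul_one, Real.norm_of_nonneg (exp_pos α).le]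
    have hval : ∀ α β : ℝ, α ≤ β → dist (exp α • e) (exp β • e) /
        (c * PM d ‖exp α • e‖ ‖exp β • e‖) = 2 * HH d ((β - α) / 2) / c := by
      intro α β hαβ
      rw [dist_comm, dist_eq_norm, ← sub_smul, norm_smul, he, mul_one, Real.norm_of_nonneg
        (sub_nonneg.2 (exp_le_exp.2 hαβ)), hn, hn, ← f_exp d α β hd, div_div, mul_comm c]
    have := h _ (hnz (-2 * w)) _ (hnz (2 * w)) _ (hnz 0)
    simp only [] at this
    rw [hval _ _ (by linarith), hval _ _ (by linarith), hval _ _ (by linarith), ← add_div,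
      div_le_div_iff_of_pos_right hc, show (2 * w - -2 * w) / 2 = 2 * w by ring,
      show (0 - -2 * w) / 2 = w by ring, show (2 * w - 0) / 2 = w by ring] at this
    linarith
  · intro h
    have hp : ∀ x ∈ {x : EuclideanSpace ℝ (Fin n) | x ≠ 0}, 0 < ‖x‖ := fun x hx =>
      norm_pos_iff.2 hx
    refine ⟨?_, ?_, ?_, ?_⟩
    · intro x hx y hy
      have := PM_pos d _ _ (hp x hx) (hp y hy)
      positivity
    · intro x hx y hy
      have := PM_pos d _ _ (hp x hx) (hp y hy)
      have h2 : c * PM d ‖x‖ ‖y‖ ≠ 0 := by positivity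
      simp only [div_eq_zero_iff, h2, or_false, dist_eq_zero]
    · intro x hx y hy
      simp only [dist_comm x y, PM_comm d ‖x‖]
    · intro x hx y hy z hz
      have T := tri d ‖x‖ ‖y‖ ‖z‖ (dist x z) (dist z y) (dist x y) h (hp x hx) (hp y hy) (hp z hz)
        dist_nonneg dist_nonneg (dist_triangle _ _ _)
        (by simpa using EuclideanGeometry.mul_dist_le_mul_dist_add_mul_dist x z y 0)
      simp only [mul_comm c, ← div_div]
      rw [← add_div]
      gcongr
end

section
/- Let n ≥ 2, c > 0, and d ≥ 1/3. Then both functions φ̂^{c,d}(x,y) = log(1 + |x−y|/(c·((|x|^d + |y|^d)/2)^{1/d})) and φ̃^{c,d}(x,y) = |x−y| / (|x−y| + 2c·((|x|^d + |y|^d)/2)^{1/d}) are metrics on ℝⁿ \ {0}. -/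
/-- The power mean. -/
noncomputable def pm (d a b : ℝ) : ℝ := ((a ^ d + b ^ d) / 2) ^ (1 / d)

lemma pm_pos {d a b : ℝ} (ha : 0 < a) (hb : 0 < b) : 0 < pm d a b := by
  unfold pm
  have := Real.rpow_pos_of_pos ha d
  have := Real.rpow_pos_of_pos hb d
  positivity

lemma pm_comm (d a b : ℝ) : pm d a b = pm d b a := by
  unfold pm; rw [add_comm]

lemma pm_mono {d a b b' : ℝ} (hd : 0 < d) (ha : 0 < a) (hb : 0 < b) (h : b ≤ b') :
    pm d a b ≤ pm d a b' := by
  unfold pm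
  have h1 := Real.rpow_pos_of_pos ha d
  have h2 := Real.rpow_pos_of_pos hb d
  have h3 := Real.rpow_le_rpow hb.le h hd.le
  apply Real.rpow_le_rpow <;> [positivity; linarith; positivity]

lemma pm_smul {d a b k : ℝ} (hd : 0 < d) (ha : 0 < a) (hb : 0 < b) (hk : 0 < k) :
    k * pm d a b = pm d (k * a) (k * b) := by
  unfold pm
  have h1 := Real.rpow_pos_of_pos ha d
  have h2 := Real.rpow_pos_of_pos hb d
  have h3 := Real.rpow_pos_of_pos hk d
  rw [Real.mul_rpow hk.le ha.le, Real.mul_rpow hk.le hb.le, ← mul_add, mul_div_assoc,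
    Real.mul_rpow h3.le (by positivity), ← Real.rpow_mul hk.le, mul_one_div_cancel hd.ne',
    Real.rpow_one]

/-- `b * M(a,t) ≤ t * M(a,b)` when `b ≤ t`. -/
lemma pm_cross {d a b t : ℝ} (hd : 0 < d) (ha : 0 < a) (hb : 0 < b) (h : b ≤ t) :
    b * pm d a t ≤ t * pm d a b := by
  have ht : 0 < t := hb.trans_le h
  rw [pm_smul hd ha ht hb, pm_smul hd ha hb ht, mul_comm b t, pm_comm, pm_comm d (t * a)]
  exact pm_mono hd (by positivity) (by positivity) (by gcongr)

lemma sinh_aux {d s : ℝ} (hd : 1 / 3 ≤ d) (hs : 0 ≤ s) :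
    Real.sinh ((1 - 2 * d) * s) ≤ d * Real.sinh s := by
  by_cases h : 1 - 2 * d ≤ 0
  · have h1 : Real.sinh ((1 - 2 * d) * s) ≤ 0 :=
      Real.sinh_nonpos_iff.2 (mul_nonpos_of_nonpos_of_nonneg h hs)
    have h2 : 0 ≤ Real.sinh s := Real.sinh_nonneg_iff.2 hs
    have : 0 ≤ d * Real.sinh s := by positivity
    linarith
  · push Not at h
    have hder : ∀ x : ℝ, HasDerivAt (fun x => d * Real.sinh x - Real.sinh ((1 - 2 * d) * x))
        (d * Real.cosh x - Real.cosh ((1 - 2 * d) * x) * (1 - 2 * d)) x := by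
      intro x
      have h1 := (Real.hasDerivAt_sinh x).const_mul d
      have h2 : HasDerivAt (fun x : ℝ => (1 - 2 * d) * x) (1 - 2 * d) x := by
        simpa using (hasDerivAt_id x).const_mul (1 - 2 * d)
      exact h1.sub h2.sinh
    have hm : Monotone (fun x => d * Real.sinh x - Real.sinh ((1 - 2 * d) * x)) := by
      apply monotone_of_deriv_nonneg (fun x => (hder x).differentiableAt)
      intro x
      rw [(hder x).deriv]
      have h1 : Real.cosh ((1 - 2 * d) * x) ≤ Real.cosh x := by
        rw [Real.cosh_le_cosh, abs_mul, abs_of_pos h]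
        have := abs_nonneg x
        nlinarith
      have h2 := Real.cosh_pos ((1 - 2 * d) * x)
      nlinarith
    have := hm hs
    simp at this
    linarith

/-- logarithm of the derivative of `gg` -/
noncomputable def LL (d s : ℝ) : ℝ :=
  Real.log (Real.cosh ((1 - d) * s)) - (1 / d + 1) * Real.log (Real.cosh (d * s))

noncomputable def gg (d s : ℝ) : ℝ :=
  Real.sinh s * Real.exp (-(1 / d) * Real.log (Real.cosh (d * s)))

lemma hasDerivAt_logcosh (k x : ℝ) : HasDerivAt (fun x => Real.log (Real.cosh (k * x)))
    (k * Real.sinh (k * x) / Real.cosh (k * x)) x := by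
  have h2 : HasDerivAt (fun x : ℝ => k * x) k x := by
    simpa using (hasDerivAt_id x).const_mul k
  have := h2.cosh.log (Real.cosh_pos _).ne'
  rwa [mul_comm k (Real.sinh _)]

lemma LL_anti {d : ℝ} (hd : 1 / 3 ≤ d) : AntitoneOn (LL d) (Set.Ici 0) := by
  have hd0 : 0 < d := by linarith
  have hder : ∀ x : ℝ, HasDerivAt (LL d)
      ((1 - d) * Real.sinh ((1 - d) * x) / Real.cosh ((1 - d) * x)
        - (1 / d + 1) * (d * Real.sinh (d * x) / Real.cosh (d * x))) x := fun x =>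
    (hasDerivAt_logcosh (1 - d) x).sub ((hasDerivAt_logcosh d x).const_mul _)
  apply antitoneOn_of_deriv_nonpos (convex_Ici 0)
  · exact fun x _ => (hder x).continuousAt.continuousWithinAt
  · exact fun x _ => (hder x).differentiableAt.differentiableWithinAt
  · intro x hx
    rw [interior_Ici] at hx
    have hx0 : 0 ≤ x := le_of_lt hx
    rw [(hder x).deriv]
    have e1 : (1 / d + 1) * (d * Real.sinh (d * x) / Real.cosh (d * x))
      = ((1 + d) * Real.sinh (d * x)) / Real.cosh (d * x) := by field_simp
    rw [e1, sub_nonpos, div_le_div_iff₀ (Real.cosh_pos _) (Real.cosh_pos _)]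
    have h := sinh_aux hd hx0
    have a1 : (1 - 2 * d) * x = (1 - d) * x - d * x := by ring
    have a2 : Real.sinh x = Real.sinh ((1 - d) * x + d * x) := by congr 1; ring
    rw [a1, a2, Real.sinh_sub, Real.sinh_add] at h
    linarith

lemma gg_deriv {d : ℝ} (hd : 0 < d) (x : ℝ) : HasDerivAt (gg d) (Real.exp (LL d x)) x := by
  have h := (Real.hasDerivAt_sinh x).mul ((hasDerivAt_logcosh d x).const_mul (-(1 / d))).exp
  have hc := Real.cosh_pos (d * x)
  have hc' := Real.cosh_pos ((1 - d) * x)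
  have e : Real.exp (LL d x) = Real.exp (-(1 / d) * Real.log (Real.cosh (d * x)))
      * (Real.cosh ((1 - d) * x) / Real.cosh (d * x)) := by
    rw [← Real.exp_log (div_pos hc' hc), ← Real.exp_add, Real.log_div hc'.ne' hc.ne', LL]
    congr 1; ring
  have e2 : Real.cosh ((1 - d) * x)
      = Real.cosh x * Real.cosh (d * x) - Real.sinh x * Real.sinh (d * x) := by
    rw [← Real.cosh_sub]; congr 1; ring
  rw [e, e2]
  refine h.congr_deriv ?_
  field_simp
  ring

lemma gg_sub {d s r : ℝ} (hd : 1 / 3 ≤ d) (hs : 0 ≤ s) (hr : 0 ≤ r) :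
    gg d (s + r) ≤ gg d s + gg d r := by
  have hd0 : 0 < d := by linarith
  have hder : ∀ x : ℝ, HasDerivAt (fun x => gg d x - gg d (x + r))
      (Real.exp (LL d x) - Real.exp (LL d (x + r))) x := fun x =>
    (gg_deriv hd0 x).sub ((gg_deriv hd0 (x + r)).comp_add_const x r)
  have hm : MonotoneOn (fun x => gg d x - gg d (x + r)) (Set.Ici 0) := by
    apply monotoneOn_of_deriv_nonneg (convex_Ici 0)
    · exact fun x _ => (hder x).continuousAt.continuousWithinAt
    · exact fun x _ => (hder x).differentiableAt.differentiableWithinAt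
    · intro x hx
      rw [interior_Ici] at hx
      have hx0 : 0 ≤ x := le_of_lt hx
      rw [(hder x).deriv, sub_nonneg, Real.exp_le_exp]
      exact LL_anti hd hx0 (by simp; linarith) (by linarith)
  have := hm (Set.mem_Ici.2 le_rfl) hs hs
  have h0 : gg d 0 = 0 := by simp [gg]
  simp only [h0, zero_add] at this
  linarith

lemma pm_exp {d : ℝ} (hd : 0 < d) (p q : ℝ) :
    (Real.exp p - Real.exp q) / pm d (Real.exp p) (Real.exp q) = 2 * gg d ((p - q) / 2) := by
  have hc := Real.cosh_pos (d * ((p - q) / 2))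
  have e1 : (Real.exp p ^ d + Real.exp q ^ d) / 2
      = Real.exp (d * ((p + q) / 2)) * Real.cosh (d * ((p - q) / 2)) := by
    rw [Real.cosh_eq, ← Real.exp_mul, ← Real.exp_mul, mul_div_assoc', mul_add, ← Real.exp_add,
      ← Real.exp_add]
    congr 3 <;> ring
  have e2 : Real.exp p - Real.exp q
      = 2 * Real.exp ((p + q) / 2) * Real.sinh ((p - q) / 2) := by
    rw [Real.sinh_eq, mul_div_assoc', mul_assoc, mul_div_cancel_left₀ _ two_ne_zero, mul_sub,
      ← Real.exp_add, ← Real.exp_add]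
    congr 2 <;> ring
  have e3 : pm d (Real.exp p) (Real.exp q) = Real.exp ((p + q) / 2)
      * Real.exp ((1 / d) * Real.log (Real.cosh (d * ((p - q) / 2)))) := by
    rw [pm, e1, Real.mul_rpow (Real.exp_pos _).le hc.le, ← Real.exp_mul,
      Real.rpow_def_of_pos hc]
    congr 2
    · field_simp
    · ring
  rw [e2, e3, gg, neg_mul, Real.exp_neg]
  field_simp

lemma oneD {d a b t : ℝ} (hd : 1 / 3 ≤ d) (hb : 0 < b) (hbt : b ≤ t) (hta : t ≤ a) :
    (a - b) / pm d a b ≤ (a - t) / pm d a t + (t - b) / pm d t b := by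
  have hd0 : 0 < d := by linarith
  have ht : 0 < t := by linarith
  have ha : 0 < a := by linarith
  have l1 := Real.log_le_log hb hbt
  have l2 := Real.log_le_log ht hta
  have h1 := pm_exp hd0 (Real.log a) (Real.log b)
  have h2 := pm_exp hd0 (Real.log a) (Real.log t)
  have h3 := pm_exp hd0 (Real.log t) (Real.log b)
  simp only [Real.exp_log ha, Real.exp_log hb, Real.exp_log ht] at h1 h2 h3
  rw [h1, h2, h3]
  have := gg_sub (s := (Real.log a - Real.log t) / 2) (r := (Real.log t - Real.log b) / 2) hd
    (by linarith) (by linarith)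
  have e : (Real.log a - Real.log t) / 2 + (Real.log t - Real.log b) / 2
    = (Real.log a - Real.log b) / 2 := by ring
  rw [e] at this
  linarith

/-- linear algebra for the middle case -/
lemma lin_aux {a b t u v w α β γ : ℝ} (ht : 0 < t) (hv : 0 ≤ v) (hγ : 0 < γ)
    (h1 : w ≤ u + v) (h2 : w * t ≤ u * b + v * a) (hβ : γ ≤ β) (hα : α ≤ γ)
    (hb : γ * b ≤ α * t) (h : γ * (a - b) ≤ α * (a - t) + β * (t - b)) :
    γ * w ≤ α * u + β * v := by
  by_cases hc : γ * (u + v) ≤ α * u + β * v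
  · nlinarith
  push Not at hc
  have hαγ : 0 < γ - α := by
    rcases hα.lt_or_eq with h' | h'
    · linarith
    · subst h'
      nlinarith
  have k1 : 0 ≤ (u * (γ - α) - v * (β - γ)) * (α * t - γ * b) :=
    mul_nonneg (by linarith) (by linarith)
  have k2 : 0 ≤ (v * γ) * (α * (a - t) + β * (t - b) - γ * (a - b)) :=
    mul_nonneg (by positivity) (by linarith)
  have k3 : 0 ≤ (γ - α) * (u * (α * t - γ * b) - v * (γ * a - β * t)) := by
    linarith
  have k4 := nonneg_of_mul_nonneg_right k3 hαγ
  have k5 : γ * (w * t) ≤ γ * (u * b + v * a) := by gcongr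
  have k6 : (γ * w) * t ≤ (α * u + β * v) * t := by linarith
  exact le_of_mul_le_mul_right k6 ht

lemma rho_tri_aux {d a b t u v w : ℝ} (hd : 1 / 3 ≤ d) (ha : 0 < a) (hb : 0 < b) (ht : 0 < t)
    (hba : b ≤ a) (hu : 0 ≤ u) (hv : 0 ≤ v)
    (h1 : w ≤ u + v) (h2 : w * t ≤ u * b + v * a) :
    w / pm d a b ≤ u / pm d a t + v / pm d t b := by
  have hd0 : 0 < d := by linarith
  have p1 := pm_pos (d := d) ha hb
  have p2 := pm_pos (d := d) ha ht
  have p3 := pm_pos (d := d) ht hb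
  rcases le_total t b with htb | hbt
  · have m1 : pm d a t ≤ pm d a b := pm_mono hd0 ha ht htb
    have m2 : pm d t b ≤ pm d a b := by
      rw [pm_comm, pm_comm d a]
      exact pm_mono hd0 hb ht (htb.trans hba)
    calc w / pm d a b ≤ (u + v) / pm d a b := by gcongr
      _ = u / pm d a b + v / pm d a b := by ring
      _ ≤ _ := by gcongr
  have c1 : b * pm d a t ≤ t * pm d a b := pm_cross hd0 ha hb hbt
  rcases le_total t a with hta | hat
  · have key := oneD hd hb hbt hta
    have m1 : pm d a b ≤ pm d a t := pm_mono hd0 ha hb hbt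
    have m2 : pm d t b ≤ pm d a b := by
      rw [pm_comm, pm_comm d a]
      exact pm_mono hd0 hb ht hta
    have := lin_aux (α := 1 / pm d a t) (β := 1 / pm d t b) (γ := 1 / pm d a b) ht hv
      (by positivity) h1 h2 (one_div_le_one_div_of_le p3 m2) (one_div_le_one_div_of_le p1 m1)
      (by rw [one_div_mul_eq_div, one_div_mul_eq_div, div_le_div_iff₀ p1 p2]; exact c1)
      (by simpa only [one_div_mul_eq_div] using key)
    simpa only [one_div_mul_eq_div] using this
  · have c2 : a * pm d t b ≤ t * pm d a b := by
      rw [pm_comm, pm_comm d a]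
      exact pm_cross hd0 hb ha hat
    have q1 : b / pm d a b ≤ t / pm d a t := by rw [div_le_div_iff₀ p1 p2]; exact c1
    have q2 : a / pm d a b ≤ t / pm d t b := by rw [div_le_div_iff₀ p1 p3]; exact c2
    have : (w / pm d a b) * t ≤ (u / pm d a t + v / pm d t b) * t := by
      calc (w / pm d a b) * t = (w * t) / pm d a b := by ring
        _ ≤ (u * b + v * a) / pm d a b := by gcongr
        _ = u * (b / pm d a b) + v * (a / pm d a b) := by ring
        _ ≤ u * (t / pm d a t) + v * (t / pm d t b) := by gcongr
        _ = _ := by ring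
    exact le_of_mul_le_mul_right this ht

lemma rho_tri {n : ℕ} {d : ℝ} (hd : 1 / 3 ≤ d) (x y z : EuclideanSpace ℝ (Fin n))
    (hx : x ≠ 0) (hy : y ≠ 0) (hz : z ≠ 0) :
    dist x y / pm d ‖x‖ ‖y‖ ≤ dist x z / pm d ‖x‖ ‖z‖ + dist z y / pm d ‖z‖ ‖y‖ := by
  have ha := norm_pos_iff.2 hx
  have hb := norm_pos_iff.2 hy
  have ht := norm_pos_iff.2 hz
  have h1 := dist_triangle x z y
  have h2 := EuclideanGeometry.mul_dist_le_mul_dist_add_mul_dist x z y 0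
  simp only [dist_zero_right] at h2
  rcases le_total ‖y‖ ‖x‖ with h | h
  · exact rho_tri_aux hd ha hb ht h dist_nonneg dist_nonneg h1 h2
  · have := rho_tri_aux (u := dist z y) (v := dist x z) (w := dist x y) hd hb ha ht h
      dist_nonneg dist_nonneg (by linarith) (by linarith)
    rw [pm_comm d ‖y‖ ‖x‖, pm_comm d ‖y‖ ‖z‖, pm_comm d ‖z‖ ‖x‖] at this
    linarith

theorem stmt7 (n : ℕ) (hn : 2 ≤ n) (c d : ℝ) (hc : 0 < c) (hd : 1 / 3 ≤ d) :
    IsMetricOn {x : EuclideanSpace ℝ (Fin n) | x ≠ 0}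
      (fun x y =>
        Real.log (1 + dist x y / (c * ((‖x‖ ^ d + ‖y‖ ^ d) / 2) ^ (1 / d)))) ∧
    IsMetricOn {x : EuclideanSpace ℝ (Fin n) | x ≠ 0}
      (fun x y =>
        dist x y / (dist x y + 2 * c * ((‖x‖ ^ d + ‖y‖ ^ d) / 2) ^ (1 / d))) := by
  have P : ∀ x ∈ {x : EuclideanSpace ℝ (Fin n) | x ≠ 0}, ∀ y ∈ {x : EuclideanSpace ℝ (Fin n) | x ≠ 0},
      0 < pm d ‖x‖ ‖y‖ := fun x hx y hy => pm_pos (norm_pos_iff.2 hx) (norm_pos_iff.2 hy)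
  change IsMetricOn _ (fun x y => Real.log (1 + dist x y / (c * pm d ‖x‖ ‖y‖))) ∧
    IsMetricOn _ (fun x y => dist x y / (dist x y + 2 * c * pm d ‖x‖ ‖y‖))
  refine ⟨⟨?_, ?_, ?_, ?_⟩, ⟨?_, ?_, ?_, ?_⟩⟩
  · intro x hx y hy
    have := P x hx y hy
    apply Real.log_nonneg
    have : 0 ≤ dist x y / (c * pm d ‖x‖ ‖y‖) := by positivity
    linarith
  · intro x hx y hy
    have hp := P x hx y hy
    constructor
    · intro h
      by_contra hne
      have h1 : 0 < dist x y := dist_pos.2 hne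
      have : 0 < dist x y / (c * pm d ‖x‖ ‖y‖) := by positivity
      have := Real.log_pos (x := 1 + dist x y / (c * pm d ‖x‖ ‖y‖)) (by linarith)
      exact this.ne' h
    · rintro rfl
      simp
  · intro x _ y _
    simp only [dist_comm x y, pm_comm d ‖x‖ ‖y‖]
  · intro x hx y hy z hz
    have p1 := P x hx y hy
    have p2 := P x hx z hz
    have p3 := P z hz y hy
    have key := rho_tri hd x y z hx hy hz
    have e : ∀ r s : ℝ, r / (c * s) = (r / s) / c := fun r s => by rw [mul_comm, div_div]
    simp only [e]
    have q1 : 0 ≤ dist x y / pm d ‖x‖ ‖y‖ := by positivity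
    have q2 : 0 ≤ dist x z / pm d ‖x‖ ‖z‖ := by positivity
    have q3 : 0 ≤ dist z y / pm d ‖z‖ ‖y‖ := by positivity
    generalize dist x y / pm d ‖x‖ ‖y‖ = A at *
    generalize dist x z / pm d ‖x‖ ‖z‖ = B at *
    generalize dist z y / pm d ‖z‖ ‖y‖ = C at *
    rw [← Real.log_mul (by positivity) (by positivity)]
    apply Real.log_le_log (by positivity)
    have h1 : A / c ≤ B / c + C / c := by rw [← add_div]; gcongr
    have h2 : 0 ≤ B / c * (C / c) := by positivity
    linarith
  · intro x hx y hy
    have := P x hx y hy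
    positivity
  · intro x hx y hy
    have hp := P x hx y hy
    have : 0 < dist x y + 2 * c * pm d ‖x‖ ‖y‖ := by positivity
    simp only [div_eq_zero_iff, this.ne', or_false, dist_eq_zero]
  · intro x _ y _
    simp only [dist_comm x y, pm_comm d ‖x‖ ‖y‖]
  · intro x hx y hy z hz
    have p1 := P x hx y hy
    have p2 := P x hx z hz
    have p3 := P z hz y hy
    have key := rho_tri hd x y z hx hy hz
    have e : ∀ r s : ℝ, 0 ≤ r → 0 < s → r / (r + 2 * c * s) = (r / s) / (r / s + 2 * c) :=
      fun r s hr hs => by field_simp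
    simp only [e _ _ dist_nonneg p1, e _ _ dist_nonneg p2, e _ _ dist_nonneg p3]
    have q1 : 0 ≤ dist x y / pm d ‖x‖ ‖y‖ := by positivity
    have q2 : 0 ≤ dist x z / pm d ‖x‖ ‖z‖ := by positivity
    have q3 : 0 ≤ dist z y / pm d ‖z‖ ‖y‖ := by positivity
    generalize dist x y / pm d ‖x‖ ‖y‖ = A at *
    generalize dist x z / pm d ‖x‖ ‖z‖ = B at *
    generalize dist z y / pm d ‖z‖ ‖y‖ = C at *
    calc A / (A + 2 * c) ≤ (B + C) / (B + C + 2 * c) := by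
          rw [div_le_div_iff₀ (by positivity) (by positivity)]
          nlinarith
      _ = B / (B + C + 2 * c) + C / (B + C + 2 * c) := by rw [add_div]
      _ ≤ B / (B + 2 * c) + C / (C + 2 * c) := by
          gcongr <;> linarith
end

section
/- Let n ≥ 2 and let G = ℝⁿ \ {0}, so that d_G(x) = |x|. For every c > 0, each of the three functions φᶜ(x,y) = |x−y|/(c·L(|x|,|y|)), φ̂ᶜ(x,y) = log(1 + |x−y|/(c·L(|x|,|y|))), and φ̃ᶜ(x,y) = |x−y|/(|x−y| + 2c·L(|x|,|y|)) is a metric on ℝⁿ \ {0}. -/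
/-- The logarithmic mean of two positive reals. -/
noncomputable def logMean (a b : ℝ) : ℝ :=
  if a = b then a else (a - b) / (Real.log a - Real.log b)

lemma sinh_slope_aux {u v : ℝ} (hu : 0 ≤ u) (huv : u ≤ v) :
    v * Real.sinh u ≤ u * Real.sinh v := by
  rcases hu.eq_or_lt with rfl | hu0
  · simp
  have hc : ConvexOn ℝ (Set.Ici 0) Real.sinh := by
    apply MonotoneOn.convexOn_of_deriv (convex_Ici 0) Real.continuous_sinh.continuousOn
      Real.differentiable_sinh.differentiableOn
    intro a ha b hb hab
    simp only [interior_Ici, Set.mem_Ioi] at ha hb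
    rw [Real.deriv_sinh]
    rw [Real.cosh_le_cosh, abs_of_pos ha, abs_of_pos hb]
    exact hab
  have hv0 : 0 < v := lt_of_lt_of_le hu0 huv
  have h := hc.2 (show (0:ℝ) ∈ Set.Ici 0 by simp) (show v ∈ Set.Ici 0 from hv0.le)
    (show 0 ≤ 1 - u / v by rw [sub_nonneg, div_le_one hv0]; exact huv)
    (show 0 ≤ u / v by positivity) (by ring)
  simp only [smul_eq_mul, mul_zero, zero_add, Real.sinh_zero] at h
  rw [div_mul_cancel₀ _ hv0.ne', div_mul_eq_mul_div, le_div_iff₀ hv0] at h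
  linarith

lemma coth_aux {u v : ℝ} (hu : 0 ≤ u) (huv : u ≤ v) :
    u * Real.cosh u * Real.sinh v ≤ v * Real.cosh v * Real.sinh u := by
  have h := sinh_slope_aux (u := v - u) (v := v + u) (by linarith) (by linarith)
  rw [Real.sinh_sub, Real.sinh_add] at h
  nlinarith

/-- `w / sinh w`. -/
noncomputable def gAux (w : ℝ) : ℝ := if w = 0 then 1 else w / Real.sinh w

lemma gAux_neg (w : ℝ) : gAux (-w) = gAux w := by
  unfold gAux
  simp [Real.sinh_neg, neg_div_neg_eq]

lemma gAux_abs (w : ℝ) : gAux |w| = gAux w := by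
  rcases abs_choice w with h | h <;> rw [h]
  exact gAux_neg w

lemma gAux_pos (w : ℝ) : 0 < gAux w := by
  rw [← gAux_abs]
  unfold gAux
  split_ifs with h
  · norm_num
  · have : 0 < |w| := lt_of_le_of_ne (abs_nonneg w) (Ne.symm h)
    have h2 := Real.sinh_pos_iff.2 this
    positivity

lemma gAux_anti {u v : ℝ} (h : |u| ≤ |v|) : gAux v ≤ gAux u := by
  rw [← gAux_abs u, ← gAux_abs v]
  have hu := abs_nonneg u
  generalize |u| = a at *
  generalize |v| = b at *
  rcases hu.eq_or_lt with rfl | ha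
  · rcases h.eq_or_lt with rfl | hb
    · exact le_rfl
    · simp only [gAux, hb.ne', if_true, if_false]
      rw [div_le_one (Real.sinh_pos_iff.2 hb)]
      exact Real.self_le_sinh_iff.2 hb.le
  · have hb : 0 < b := ha.trans_le h
    simp only [gAux, hb.ne', ha.ne', if_false]
    rw [div_le_div_iff₀ (Real.sinh_pos_iff.2 hb) (Real.sinh_pos_iff.2 ha)]
    exact sinh_slope_aux hu h

lemma gAux_cosh (w : ℝ) : w ^ 2 + gAux w ^ 2 = (gAux w * Real.cosh w) ^ 2 := by
  have h : w = gAux w * Real.sinh w := by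
    unfold gAux
    split_ifs with h
    · simp [h]
    · rw [div_mul_cancel₀ _ (by simpa using h)]
  nth_rewrite 1 [h]
  rw [mul_pow, mul_pow, Real.cosh_sq]
  ring

lemma gcosh_mono {u v : ℝ} (h : |u| ≤ |v|) :
    gAux u * Real.cosh u ≤ gAux v * Real.cosh v := by
  rw [← gAux_abs u, ← gAux_abs v, ← Real.cosh_abs u, ← Real.cosh_abs v]
  have hu := abs_nonneg u
  generalize |u| = a at *
  generalize |v| = b at *
  rcases hu.eq_or_lt with rfl | ha
  · rcases h.eq_or_lt with rfl | hb
    · exact le_rfl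
    · have h1 := gAux_cosh b
      have h2 := gAux_pos b
      have h3 := Real.cosh_pos b
      simp only [gAux, if_true, Real.cosh_zero, mul_one, hb.ne', if_false]
      have hs := Real.sinh_pos_iff.2 hb
      rw [div_mul_eq_mul_div, le_div_iff₀ hs, one_mul]
      -- sinh b ≤ b cosh b
      have hm : MonotoneOn (fun x => x * Real.cosh x - Real.sinh x) (Set.Ici 0) := by
        apply monotoneOn_of_deriv_nonneg (convex_Ici 0)
        · exact ((continuous_id.mul Real.continuous_cosh).sub Real.continuous_sinh).continuousOn
        · exact ((differentiable_id.mul Real.differentiable_cosh).sub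
            Real.differentiable_sinh).differentiableOn
        · intro x hx
          simp only [interior_Ici, Set.mem_Ioi] at hx
          have hd : HasDerivAt (fun x => x * Real.cosh x - Real.sinh x)
              (1 * Real.cosh x + x * Real.sinh x - Real.cosh x) x :=
            ((hasDerivAt_id x).mul (Real.hasDerivAt_cosh x)).sub (Real.hasDerivAt_sinh x)
          rw [hd.deriv]
          have := Real.sinh_pos_iff.2 hx
          have := mul_pos hx this
          linarith
      have := hm (by simp) (by simpa using hb.le) hb.le
      simp at this
      linarith
  · have hb : 0 < b := ha.trans_le h
    simp only [gAux, hb.ne', ha.ne', if_false]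
    rw [div_mul_eq_mul_div, div_mul_eq_mul_div,
      div_le_div_iff₀ (Real.sinh_pos_iff.2 ha) (Real.sinh_pos_iff.2 hb)]
    exact coth_aux hu h

/-- Half of the metric, in logarithmic polar coordinates. -/
noncomputable def fAux (w C : ℝ) : ℝ := √(w ^ 2 + (gAux w * C) ^ 2)

lemma fAux_mono {u v C : ℝ} (h : |u| ≤ |v|) (h0 : 0 ≤ C) (h1 : C ≤ 1) : fAux u C ≤ fAux v C := by
  apply Real.sqrt_le_sqrt
  have e1 := gAux_cosh u
  have e2 := gAux_cosh v
  have hm : (gAux u * Real.cosh u) ^ 2 ≤ (gAux v * Real.cosh v) ^ 2 :=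
    pow_le_pow_left₀ (mul_nonneg (gAux_pos u).le (Real.cosh_pos u).le) (gcosh_mono h) 2
  have hs : u ^ 2 ≤ v ^ 2 := sq_le_sq.2 h
  have hC : C ^ 2 ≤ 1 := pow_le_one₀ h0 h1
  rw [mul_pow, mul_pow]
  nlinarith [sq_nonneg C, mul_nonneg (sub_nonneg.2 hs) (sub_nonneg.2 hC),
    mul_nonneg (sub_nonneg.2 hm) (sq_nonneg C)]

lemma mink (a b c d : ℝ) : √((a + b) ^ 2 + (c + d) ^ 2) ≤ √(a ^ 2 + c ^ 2) + √(b ^ 2 + d ^ 2) := by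
  have h := norm_add_le (⟨a, c⟩ : ℂ) ⟨b, d⟩
  simp only [Complex.norm_eq_sqrt_sq_add_sq, Complex.add_re, Complex.add_im] at h
  exact h

lemma fAux_tri {s t r C C1 C2 : ℝ} (h0 : 0 ≤ C) (hC : C ≤ C1 + C2) (h10 : 0 ≤ C1) (h11 : C1 ≤ 1)
    (h20 : 0 ≤ C2) (h21 : C2 ≤ 1) : fAux (s - t) C ≤ fAux (s - r) C1 + fAux (r - t) C2 := by
  obtain ⟨q, k1, k2, k3, k4⟩ : ∃ q, |s - q| ≤ |s - r| ∧ |q - t| ≤ |r - t| ∧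
      |s - q| ≤ |s - t| ∧ |q - t| ≤ |s - t| := by
    refine ⟨max (min s t) (min r (max s t)), ?_⟩
    rcases le_total s t with h | h <;> rcases le_total r s with h' | h' <;>
      rcases le_total r t with h'' | h'' <;>
      simp only [min_eq_left, min_eq_right, max_eq_left, max_eq_right, h, h', h''] <;>
      refine ⟨?_, ?_, ?_, ?_⟩ <;> grind
  have a1 := fAux_mono k1 h10 h11
  have a2 := fAux_mono k2 h20 h21
  refine le_trans ?_ (add_le_add a1 a2)
  have g0 := gAux_pos (s - t)
  have g1 := gAux_anti k3
  have g2 := gAux_anti k4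
  have b1 : √((s - q) ^ 2 + (gAux (s - t) * C1) ^ 2) ≤ fAux (s - q) C1 := by
    unfold fAux; gcongr
  have b2 : √((q - t) ^ 2 + (gAux (s - t) * C2) ^ 2) ≤ fAux (q - t) C2 := by
    unfold fAux; gcongr
  refine le_trans ?_ (add_le_add b1 b2)
  refine le_trans ?_ (mink _ _ _ _)
  unfold fAux
  rw [sub_add_sub_cancel, ← mul_add]
  gcongr

lemma logMean_exp (s t : ℝ) :
    logMean (Real.exp (2 * s)) (Real.exp (2 * t)) = Real.exp (s + t) / gAux (s - t) := by
  unfold logMean gAux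
  by_cases h : s = t
  · subst h; simp [two_mul]
  · have h' : s - t ≠ 0 := sub_ne_zero.2 h
    have hs : Real.sinh (s - t) ≠ 0 := by simpa using h'
    have h2 : Real.exp (2 * s) ≠ Real.exp (2 * t) := by simpa using h
    rw [if_neg h2, if_neg h', Real.log_exp, Real.log_exp]
    have : Real.exp (2 * s) - Real.exp (2 * t) = 2 * Real.exp (s + t) * Real.sinh (s - t) := by
      rw [Real.sinh_eq]
      have e1 : Real.exp (2 * s) = Real.exp (s + t) * Real.exp (s - t) := by
        rw [← Real.exp_add]; ring_nf
      have e2 : Real.exp (2 * t) = Real.exp (s + t) * Real.exp (-(s - t)) := by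
        rw [← Real.exp_add]; ring_nf
      rw [e1, e2]; ring
    rw [this, ← mul_sub]
    field_simp

section
variable {E : Type*} [NormedAddCommGroup E] [InnerProductSpace ℝ E]

lemma dist_eq_fAux (p q : E) (hp : ‖p‖ = 1) (hq : ‖q‖ = 1) (s t : ℝ) :
    dist (Real.exp (2 * s) • p) (Real.exp (2 * t) • q) /
      logMean (Real.exp (2 * s)) (Real.exp (2 * t)) = 2 * fAux (s - t) (‖p - q‖ / 2) := by
  rw [logMean_exp]
  have g0 := gAux_pos (s - t)
  have e0 := Real.exp_pos (s + t)
  have hw : gAux (s - t) * Real.sinh (s - t) = s - t := by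
    unfold gAux
    split_ifs with h
    · simp [h]
    · rw [div_mul_cancel₀ _ (by simpa using h)]
  have e1 : Real.exp (2 * s) = Real.exp (s + t) * Real.exp (s - t) := by
    rw [← Real.exp_add]; ring_nf
  have e2 : Real.exp (2 * t) = Real.exp (s + t) * Real.exp (-(s - t)) := by
    rw [← Real.exp_add]; ring_nf
  have e3 : Real.exp (s - t) * Real.exp (-(s - t)) = 1 := by
    rw [← Real.exp_add]; simp
  have hd : dist (Real.exp (2 * s) • p) (Real.exp (2 * t) • q) ^ 2 =
      Real.exp (s + t) ^ 2 * (4 * Real.sinh (s - t) ^ 2 + ‖p - q‖ ^ 2) := by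
    rw [dist_eq_norm, norm_sub_sq_real, norm_sub_sq_real, norm_smul, norm_smul, hp, hq,
      real_inner_smul_left, real_inner_smul_right, Real.norm_of_nonneg (Real.exp_pos _).le,
      Real.norm_of_nonneg (Real.exp_pos _).le, e1, e2, Real.sinh_eq]
    linear_combination (2 - 2 * inner ℝ p q) * Real.exp (s + t) ^ 2 * e3
  have hsq : (dist (Real.exp (2 * s) • p) (Real.exp (2 * t) • q) /
      (Real.exp (s + t) / gAux (s - t))) ^ 2 = (2 * fAux (s - t) (‖p - q‖ / 2)) ^ 2 := by
    rw [div_pow, hd, mul_pow 2, fAux, Real.sq_sqrt (by positivity)]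
    have hw2 : (s - t) ^ 2 = gAux (s - t) ^ 2 * Real.sinh (s - t) ^ 2 := by
      rw [← mul_pow, hw]
    rw [hw2]
    field_simp
    ring
  have := fun (a b : ℝ) (ha : 0 ≤ a) (hb : 0 ≤ b) (h : a ^ 2 = b ^ 2) =>
    (pow_left_inj₀ ha hb two_ne_zero).1 h
  exact this _ _ (by positivity) (by unfold fAux; positivity) hsq

lemma exists_polar (x : E) (hx : x ≠ 0) : ∃ (s : ℝ) (p : E), ‖p‖ = 1 ∧ x = Real.exp (2 * s) • p ∧
    ‖x‖ = Real.exp (2 * s) := by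
  have h : 0 < ‖x‖ := norm_pos_iff.2 hx
  refine ⟨Real.log ‖x‖ / 2, ‖x‖⁻¹ • x, ?_, ?_, ?_⟩
  · rw [norm_smul, norm_inv, norm_norm, inv_mul_cancel₀ h.ne']
  · rw [mul_div_cancel₀ _ two_ne_zero, Real.exp_log h, smul_inv_smul₀ h.ne']
  · rw [mul_div_cancel₀ _ two_ne_zero, Real.exp_log h]

lemma logMean_pos' {x y : E} (hx : x ≠ 0) (hy : y ≠ 0) : 0 < logMean ‖x‖ ‖y‖ := by
  obtain ⟨s, p, _, _, h1⟩ := exists_polar x hx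
  obtain ⟨t, q, _, _, h2⟩ := exists_polar y hy
  rw [h1, h2, logMean_exp]
  exact div_pos (Real.exp_pos _) (gAux_pos _)

lemma logMean_comm' (a b : ℝ) : logMean a b = logMean b a := by
  unfold logMean
  by_cases h : a = b
  · simp [h]
  · rw [if_neg h, if_neg (Ne.symm h), ← neg_sub a b, ← neg_sub (Real.log a), neg_div_neg_eq]

lemma phi_tri {x y z : E} (hx : x ≠ 0) (hy : y ≠ 0) (hz : z ≠ 0) :
    dist x y / logMean ‖x‖ ‖y‖ ≤ dist x z / logMean ‖x‖ ‖z‖ + dist z y / logMean ‖z‖ ‖y‖ := by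
  obtain ⟨s, p, hp, h1, h1'⟩ := exists_polar x hx
  obtain ⟨t, q, hq, h2, h2'⟩ := exists_polar y hy
  obtain ⟨r, o, ho, h3, h3'⟩ := exists_polar z hz
  rw [h1', h2', h3', h1, h2, h3, dist_eq_fAux p q hp hq, dist_eq_fAux p o hp ho,
    dist_eq_fAux o q ho hq]
  have i1 := norm_sub_le p o
  have i2 := norm_sub_le o q
  have i3 := norm_sub_le_norm_sub_add_norm_sub p o q
  rw [hp, ho] at i1
  rw [ho, hq] at i2
  have := fAux_tri (s := s) (t := t) (r := r) (C := ‖p - q‖ / 2) (C1 := ‖p - o‖ / 2)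
    (C2 := ‖o - q‖ / 2) (by positivity) (by linarith) (by positivity) (by linarith)
    (by positivity) (by linarith)
  linarith

lemma phi_metric (c : ℝ) (hc : 0 < c) :
    IsMetricOn {x : E | x ≠ 0} (fun x y => dist x y / (c * logMean ‖x‖ ‖y‖)) := by
  refine ⟨fun x hx y hy => ?_, fun x hx y hy => ?_, fun x hx y hy => ?_,
    fun x hx y hy z hz => ?_⟩
  · have := logMean_pos' hx hy
    positivity
  · have := logMean_pos' hx hy
    have h : c * logMean ‖x‖ ‖y‖ ≠ 0 := by positivity
    simp only [div_eq_zero_iff, h, or_false, dist_eq_zero]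
  · simp only [dist_comm x y, logMean_comm' ‖x‖ ‖y‖]
  · simp only [mul_comm c, ← div_div, ← add_div]
    have := phi_tri hx hy hz
    gcongr
end

lemma IsMetricOn.comp_aux {E : Type*} {S : Set E} {d d' : E → E → ℝ} (h : IsMetricOn S d)
    (f : ℝ → ℝ) (hd : ∀ x ∈ S, ∀ y ∈ S, d' x y = f (d x y)) (h0 : f 0 = 0)
    (hpos : ∀ a, 0 < a → 0 < f a)
    (hsub : ∀ a b c, 0 ≤ a → 0 ≤ b → 0 ≤ c → a ≤ b + c → f a ≤ f b + f c) :
    IsMetricOn S d' := by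
  obtain ⟨n1, n2, n3, n4⟩ := h
  refine ⟨fun x hx y hy => ?_, fun x hx y hy => ?_, fun x hx y hy => ?_,
    fun x hx y hy z hz => ?_⟩
  · rw [hd x hx y hy]
    rcases (n1 x hx y hy).eq_or_lt with h | h
    · rw [← h, h0]
    · exact (hpos _ h).le
  · rw [hd x hx y hy, ← n2 x hx y hy]
    constructor
    · intro he
      rcases (n1 x hx y hy).eq_or_lt with h | h
      · exact h.symm
      · exact absurd he (hpos _ h).ne'
    · intro he
      rw [he, h0]
  · rw [hd x hx y hy, hd y hy x hx, n3 x hx y hy]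
  · rw [hd x hx y hy, hd x hx z hz, hd z hz y hy]
    exact hsub _ _ _ (n1 x hx y hy) (n1 x hx z hz) (n1 z hz y hy) (n4 x hx y hy z hz)

theorem stmt8 (n : ℕ) (hn : 2 ≤ n) (c : ℝ) (hc : 0 < c) :
    IsMetricOn {x : EuclideanSpace ℝ (Fin n) | x ≠ 0}
      (fun x y => dist x y / (c * logMean ‖x‖ ‖y‖)) ∧
    IsMetricOn {x : EuclideanSpace ℝ (Fin n) | x ≠ 0}
      (fun x y => Real.log (1 + dist x y / (c * logMean ‖x‖ ‖y‖))) ∧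
    IsMetricOn {x : EuclideanSpace ℝ (Fin n) | x ≠ 0}
      (fun x y => dist x y / (dist x y + 2 * c * logMean ‖x‖ ‖y‖)) := by
  have h := phi_metric (E := EuclideanSpace ℝ (Fin n)) c hc
  refine ⟨h, h.comp_aux (fun a => Real.log (1 + a)) (fun _ _ _ _ => rfl) (by simp)
    (fun a ha => Real.log_pos (by linarith)) ?_,
    h.comp_aux (fun a => a / (a + 2)) ?_ (by simp) (fun a ha => by positivity) ?_⟩
  · intro a b c ha hb hc habc
    rw [← Real.log_mul (by positivity) (by positivity)]
    apply Real.log_le_log (by positivity)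
    nlinarith [mul_nonneg hb hc]
  · intro x hx y hy
    have := logMean_pos' hx hy
    have hd : 0 ≤ dist x y := dist_nonneg
    have h1 : dist x y + 2 * c * logMean ‖x‖ ‖y‖ ≠ 0 := by positivity
    field_simp
  · intro a b c ha hb hc habc
    have h1 : a / (a + 2) ≤ (b + c) / (b + c + 2) := by
      rw [div_le_div_iff₀ (by positivity) (by positivity)]
      nlinarith
    have h2 : b / (b + c + 2) ≤ b / (b + 2) := by gcongr; linarith
    have h3 : c / (b + c + 2) ≤ c / (c + 2) := by gcongr; linarith
    rw [add_div] at h1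
    linarith
end

section
/- Let n ≥ 2 and let ℍⁿ = {x ∈ ℝⁿ : xₙ > 0} be the upper half-space, so that d_{ℍⁿ}(x) = xₙ. For every c > 0, neither the function φᶜ(x,y) = |x−y|/(c·L(xₙ, yₙ)) nor the function φ̂ᶜ(x,y) = log(1 + |x−y|/(c·L(xₙ, yₙ))) is a metric on ℍⁿ: in each case the triangle inequality fails for some triple of points of ℍⁿ. -/
theorem stmt9 (n : ℕ) (hn : 2 ≤ n) (c : ℝ) (hc : 0 < c) :
    (∃ x ∈ {p : EuclideanSpace ℝ (Fin n) | 0 < p ⟨n - 1, by omega⟩},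
      ∃ y ∈ {p : EuclideanSpace ℝ (Fin n) | 0 < p ⟨n - 1, by omega⟩},
      ∃ z ∈ {p : EuclideanSpace ℝ (Fin n) | 0 < p ⟨n - 1, by omega⟩},
        dist x z / (c * logMean (x ⟨n - 1, by omega⟩) (z ⟨n - 1, by omega⟩)) +
          dist z y / (c * logMean (z ⟨n - 1, by omega⟩) (y ⟨n - 1, by omega⟩)) <
          dist x y / (c * logMean (x ⟨n - 1, by omega⟩) (y ⟨n - 1, by omega⟩))) ∧
    (∃ x ∈ {p : EuclideanSpace ℝ (Fin n) | 0 < p ⟨n - 1, by omega⟩},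
      ∃ y ∈ {p : EuclideanSpace ℝ (Fin n) | 0 < p ⟨n - 1, by omega⟩},
      ∃ z ∈ {p : EuclideanSpace ℝ (Fin n) | 0 < p ⟨n - 1, by omega⟩},
        Real.log (1 + dist x z /
            (c * logMean (x ⟨n - 1, by omega⟩) (z ⟨n - 1, by omega⟩))) +
          Real.log (1 + dist z y /
            (c * logMean (z ⟨n - 1, by omega⟩) (y ⟨n - 1, by omega⟩))) <
          Real.log (1 + dist x y /
            (c * logMean (x ⟨n - 1, by omega⟩) (y ⟨n - 1, by omega⟩)))) := by
  obtain ⟨s, u, hs, hu, hlog, hmain⟩ : ∃ s u : ℝ, 0 < s ∧ 0 < u ∧ Real.log (1 + u) = s ∧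
      2 * s + 2 * s ^ 2 / c < u := by
    have h12 : (0 : ℝ) < 12 / c := by positivity
    obtain ⟨s, hs⟩ : ∃ s : ℝ, s = 12 / c + 12 := ⟨_, rfl⟩
    have hs12 : 12 < s := by linarith
    have h := Real.pow_div_factorial_le_exp s (by linarith) 3
    have h3 : s ^ 3 / 6 = 2 * s ^ 2 / c + 2 * s ^ 2 := by
      have : s ^ 3 = s ^ 2 * (12 / c + 12) := by rw [← hs]; ring
      rw [this]; ring
    have hf : ((Nat.factorial 3 : ℕ) : ℝ) = 6 := by norm_num [Nat.factorial]
    rw [hf, h3] at h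
    have hp : 0 < 2 * s ^ 2 / c := by positivity
    refine ⟨s, Real.exp s - 1, by linarith, by nlinarith, ?_, by nlinarith⟩
    rw [add_sub_cancel, Real.log_exp]
  obtain ⟨i, hi⟩ : ∃ i : Fin n, i = ⟨n - 1, by omega⟩ := ⟨_, rfl⟩
  obtain ⟨j, hj⟩ : ∃ j : Fin n, j = ⟨0, by omega⟩ := ⟨_, rfl⟩
  have hij : i ≠ j := by
    rw [hi, hj, Ne, Fin.mk.injEq]; omega
  simp only [← hi]
  let x : EuclideanSpace ℝ (Fin n) := EuclideanSpace.single i 1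
  let y : EuclideanSpace ℝ (Fin n) := EuclideanSpace.single i 1 + EuclideanSpace.single j (2 * u)
  let z : EuclideanSpace ℝ (Fin n) :=
    EuclideanSpace.single i 1 + (EuclideanSpace.single i u + EuclideanSpace.single j u)
  have hx : x i = 1 := by simp [x]
  have hy : y i = 1 := by simp [y, hij]
  have hz : z i = 1 + u := by simp [z, hij]
  have nrm : ∀ k : Fin n, ‖(EuclideanSpace.single k u : EuclideanSpace ℝ (Fin n))‖ = u := by
    intro k; simp [abs_of_pos hu]
  have dxy : dist x y = 2 * u := by
    rw [dist_comm, dist_eq_norm]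
    simp [x, y, abs_of_pos hu]
  have dxz : dist x z ≤ 2 * u := by
    rw [dist_comm, dist_eq_norm]
    have : z - x = EuclideanSpace.single i u + EuclideanSpace.single j u := by
      simp only [z, x]; abel
    rw [this]
    refine (norm_add_le _ _).trans ?_
    rw [nrm, nrm]; linarith
  have dzy : dist z y ≤ 2 * u := by
    rw [dist_eq_norm]
    have h2 : (EuclideanSpace.single j (2 * u) : EuclideanSpace ℝ (Fin n)) =
        EuclideanSpace.single j u + EuclideanSpace.single j u := by
      ext k
      by_cases hk : k = j <;> simp [hk, two_mul]
    have : z - y = EuclideanSpace.single i u - EuclideanSpace.single j u := by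
      simp only [z, y, h2]; abel
    rw [this]
    refine (norm_sub_le _ _).trans ?_
    rw [nrm, nrm]; linarith
  have L1 : logMean 1 (1 + u) = u / s := by
    rw [logMean, if_neg (by linarith), hlog, Real.log_one, zero_sub, ← neg_div_neg_eq]
    congr 1 <;> ring
  have L2 : logMean (1 + u) 1 = u / s := by
    rw [logMean, if_neg (by linarith), hlog, Real.log_one]
    congr 1 <;> ring
  have L3 : logMean 1 1 = 1 := by simp [logMean]
  have key : ∀ d : ℝ, d ≤ 2 * u → d / (c * (u / s)) ≤ 2 * s / c := by
    intro d hd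
    have : 2 * s / c = 2 * u / (c * (u / s)) := by field_simp
    rw [this]; gcongr
  have hA0 : 0 ≤ dist x z / (c * (u / s)) := by positivity
  have hB0 : 0 ≤ dist z y / (c * (u / s)) := by positivity
  have hA := key _ dxz
  have hB := key _ dzy
  have hfin : (2 * s / c) + (2 * s / c) + (2 * s / c) * (2 * s / c) < 2 * u / (c * 1) := by
    have e1 : (2 * s / c) + (2 * s / c) + (2 * s / c) * (2 * s / c) =
      (2 * (2 * s + 2 * s ^ 2 / c)) / c := by field_simp; ring
    rw [e1, mul_one]; gcongr
  have hm := mul_le_mul hA hB hB0 (hA0.trans hA)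
  have hx0 : 0 < x i := by rw [hx]; norm_num
  have hy0 : 0 < y i := by rw [hy]; norm_num
  have hz0 : 0 < z i := by rw [hz]; linarith
  refine ⟨⟨x, hx0, y, hy0, z, hz0, ?_⟩, ⟨x, hx0, y, hy0, z, hz0, ?_⟩⟩
  · rw [hx, hy, hz, L1, L2, L3, dxy]
    have := mul_nonneg hA0 hB0
    linarith
  · rw [hx, hy, hz, L1, L2, L3, dxy, ← Real.log_mul (by linarith) (by linarith)]
    apply Real.log_lt_log
    · exact mul_pos (by linarith) (by linarith)
    · linarith
end

section
/- For every c > 0 and all x, y ∈ ℍⁿ = {x ∈ ℝⁿ : xₙ > 0} (n ≥ 2), the inequality (1/(1+c))·T(x,y) ≤ |x−y|/(|x−y| + c(xₙ + yₙ)) ≤ max{1, 1/c}·T(x,y) holds, where T(x,y) = |x−y|/√(|x−y|² + 4 xₙ yₙ). -/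
theorem stmt11_aux (c d a b : ℝ) (hc : 0 < c) (ha : 0 < a) (hb : 0 < b) (hd : 0 ≤ d)
    (h : (a - b) ^ 2 ≤ d ^ 2) :
    (1 / (1 + c)) * (d / Real.sqrt (d ^ 2 + 4 * a * b)) ≤ d / (d + c * (a + b)) ∧
    d / (d + c * (a + b)) ≤ max 1 (1 / c) * (d / Real.sqrt (d ^ 2 + 4 * a * b)) := by
  have hab : 0 < a * b := mul_pos ha hb
  have hS : 0 < Real.sqrt (d ^ 2 + 4 * a * b) := Real.sqrt_pos.mpr (by nlinarith [sq_nonneg d])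
  have h1 : d ≤ Real.sqrt (d ^ 2 + 4 * a * b) := Real.le_sqrt_of_sq_le (by nlinarith)
  have h2 : a + b ≤ Real.sqrt (d ^ 2 + 4 * a * b) := Real.le_sqrt_of_sq_le (by nlinarith)
  have h3 : Real.sqrt (d ^ 2 + 4 * a * b) ≤ d + (a + b) :=
    Real.sqrt_le_iff.mpr ⟨by positivity, by nlinarith [sq_nonneg (a - b), mul_nonneg hd ha.le, mul_nonneg hd hb.le]⟩
  generalize Real.sqrt (d ^ 2 + 4 * a * b) = S at *
  have hD : 0 < d + c * (a + b) := by positivity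
  constructor
  · rw [div_mul_div_comm, one_mul]
    apply div_le_div_of_nonneg_left hd hD
    nlinarith [mul_le_mul_of_nonneg_left h2 hc.le]
  · rw [← mul_div_assoc, div_le_div_iff₀ hD hS]
    have m1 : 1 ≤ max 1 (1 / c) := le_max_left _ _
    have m2 : 1 ≤ max 1 (1 / c) * c := by
      have := mul_le_mul_of_nonneg_right (le_max_right 1 (1 / c)) hc.le
      rwa [one_div_mul_cancel hc.ne'] at this
    generalize max 1 (1 / c) = M at *
    have h4 : S ≤ M * (d + c * (a + b)) := by
      nlinarith [mul_le_mul_of_nonneg_right m1 hd, mul_le_mul_of_nonneg_right m2 (add_pos ha hb).le]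
    nlinarith [mul_le_mul_of_nonneg_left h4 hd]

theorem stmt11 (n : ℕ) (hn : 2 ≤ n) (c : ℝ) (hc : 0 < c)
    (x y : EuclideanSpace ℝ (Fin n))
    (hx : 0 < x ⟨n - 1, by omega⟩) (hy : 0 < y ⟨n - 1, by omega⟩) :
    (1 / (1 + c)) *
        (dist x y / Real.sqrt (dist x y ^ 2 + 4 * x ⟨n - 1, by omega⟩ * y ⟨n - 1, by omega⟩)) ≤
      dist x y / (dist x y + c * (x ⟨n - 1, by omega⟩ + y ⟨n - 1, by omega⟩)) ∧
    dist x y / (dist x y + c * (x ⟨n - 1, by omega⟩ + y ⟨n - 1, by omega⟩)) ≤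
      max 1 (1 / c) *
        (dist x y / Real.sqrt (dist x y ^ 2 + 4 * x ⟨n - 1, by omega⟩ * y ⟨n - 1, by omega⟩)) := by
  refine stmt11_aux c _ _ _ hc hx hy dist_nonneg ?_
  have h := PiLp.norm_apply_le (x - y) (⟨n - 1, by omega⟩ : Fin n)
  rw [← dist_eq_norm, Real.norm_eq_abs] at h
  exact sq_le_sq' (by have := neg_abs_le ((x - y) (⟨n - 1, by omega⟩ : Fin n)); simp at this h ⊢; linarith)
    ((le_abs_self _).trans h)
end

section
/- The constants in the two-sided comparison of φ̃ᶜ_{ℍⁿ} with T on the upper half-space are sharp: for every c > 0 and every ε > 0 there exist distinct points x, y ∈ ℍⁿ with |x−y|/(|x−y| + c(xₙ + yₙ)) < (1/(1+c) + ε)·T(x,y), and there exist distinct points x', y' ∈ ℍⁿ with |x'−y'|/(|x'−y'| + c(x'ₙ + y'ₙ)) > (max{1, 1/c} − ε)·T(x',y'). -/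
lemma vert (n : ℕ) (i : Fin n) (c s : ℝ) (hs : 0 < s) (hs1 : s < 1) :
    ∃ x y : EuclideanSpace ℝ (Fin n), 0 < x i ∧ 0 < y i ∧ x ≠ y ∧
      dist x y / (dist x y + c * (x i + y i)) = s * (1 / (s + c)) ∧
      dist x y / Real.sqrt (dist x y ^ 2 + 4 * x i * y i) = s := by
  have hd : dist (EuclideanSpace.single i (1 + s) : EuclideanSpace ℝ (Fin n))
      (EuclideanSpace.single i (1 - s)) = 2 * s := by
    rw [EuclideanSpace.dist_single_same, Real.dist_eq]
    rw [show 1 + s - (1 - s) = 2 * s by ring, abs_of_pos (by linarith)]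
  refine ⟨EuclideanSpace.single i (1 + s), EuclideanSpace.single i (1 - s), ?_, ?_, ?_, ?_, ?_⟩
  · simp; linarith
  · simp; linarith
  · rw [← dist_pos, hd]; linarith
  · rw [hd]
    simp only [PiLp.single_apply, if_true]
    rw [show 2 * s + c * (1 + s + (1 - s)) = 2 * (s + c) by ring,
      mul_div_mul_left _ _ (two_ne_zero), mul_one_div]
  · rw [hd]
    simp only [PiLp.single_apply, if_true]
    rw [show (2 * s) ^ 2 + 4 * (1 + s) * (1 - s) = 2 ^ 2 by ring, Real.sqrt_sq (by norm_num)]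
    ring

lemma horiz (n : ℕ) (i j : Fin n) (hij : i ≠ j) (D : ℝ) (hD : 0 < D) :
    ∃ x y : EuclideanSpace ℝ (Fin n), x i = 1 ∧ y i = 1 ∧ dist x y = D := by
  refine ⟨EuclideanSpace.single i 1, EuclideanSpace.single i 1 + EuclideanSpace.single j D,
    ?_, ?_, ?_⟩
  · simp
  · simp [hij]
  · simp [abs_of_pos hD]


theorem stmt12 (n : ℕ) (hn : 2 ≤ n) (c : ℝ) (hc : 0 < c) (ε : ℝ) (hε : 0 < ε) :
    (∃ x ∈ {p : EuclideanSpace ℝ (Fin n) | 0 < p ⟨n - 1, by omega⟩},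
      ∃ y ∈ {p : EuclideanSpace ℝ (Fin n) | 0 < p ⟨n - 1, by omega⟩}, x ≠ y ∧
        dist x y / (dist x y + c * (x ⟨n - 1, by omega⟩ + y ⟨n - 1, by omega⟩)) <
          (1 / (1 + c) + ε) *
            (dist x y /
              Real.sqrt (dist x y ^ 2 + 4 * x ⟨n - 1, by omega⟩ * y ⟨n - 1, by omega⟩))) ∧
    (∃ x ∈ {p : EuclideanSpace ℝ (Fin n) | 0 < p ⟨n - 1, by omega⟩},
      ∃ y ∈ {p : EuclideanSpace ℝ (Fin n) | 0 < p ⟨n - 1, by omega⟩}, x ≠ y ∧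
        dist x y / (dist x y + c * (x ⟨n - 1, by omega⟩ + y ⟨n - 1, by omega⟩)) >
          (max 1 (1 / c) - ε) *
            (dist x y /
              Real.sqrt (dist x y ^ 2 + 4 * x ⟨n - 1, by omega⟩ * y ⟨n - 1, by omega⟩))) := by
  constructor
  · set u := min (1 / 2) (ε / 2) with hu
    have hu0 : 0 < u := by positivity
    have hu1 : u ≤ 1 / 2 := min_le_left _ _
    have hu2 : u ≤ ε / 2 := min_le_right _ _
    obtain ⟨x, y, hx, hy, hxy, h1, h2⟩ :=
      vert n ⟨n - 1, by omega⟩ c (1 - u) (by linarith) (by linarith)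
    refine ⟨x, hx, y, hy, hxy, ?_⟩
    rw [h1, h2, mul_comm]
    apply mul_lt_mul_of_pos_right _ (by linarith)
    have h3 : 0 < 1 - u + c := by linarith
    have h4 : 0 < 1 + c := by linarith
    rw [← sub_lt_iff_lt_add', div_sub_div _ _ h3.ne' h4.ne', div_lt_iff₀ (by positivity)]
    have h5 : 1 / 2 < (1 - u + c) * (1 + c) := by nlinarith
    nlinarith
  · rcases le_total 1 (1 / c) with h | h
    · rw [max_eq_right h]
      set s := min (1 / 2) (c ^ 2 * ε) with hs
      have hs0 : 0 < s := by positivity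
      have hs1 : s ≤ 1 / 2 := min_le_left _ _
      have hs2 : s ≤ c ^ 2 * ε := min_le_right _ _
      obtain ⟨x, y, hx, hy, hxy, h1, h2⟩ :=
        vert n ⟨n - 1, by omega⟩ c s hs0 (by linarith)
      refine ⟨x, hx, y, hy, hxy, ?_⟩
      rw [h1, h2, mul_comm s]
      apply mul_lt_mul_of_pos_right _ hs0
      have h3 : 0 < s + c := by linarith
      rw [sub_lt_comm, div_sub_div _ _ hc.ne' h3.ne', div_lt_iff₀ (by positivity)]
      have : 0 < c * s * ε := by positivity
      nlinarith
    · rw [max_eq_left h]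
      obtain ⟨x, y, hx, hy, hd⟩ := horiz n ⟨n - 1, by omega⟩ ⟨0, by omega⟩
        (by simp [Fin.ext_iff]; omega) (2 * c / ε) (by positivity)
      have hD : 0 < 2 * c / ε := by positivity
      refine ⟨x, by simp [hx], y, by simp [hy], ?_, ?_⟩
      · rw [← dist_pos, hd]; exact hD
      · rw [hd, hx, hy]
        have e : 2 * c / ε / (2 * c / ε + c * (1 + 1)) = 1 / (1 + ε) := by
          field_simp
          try ring
        rw [e]
        set D := 2 * c / ε
        have hT0 : 0 < D / Real.sqrt (D ^ 2 + 4 * 1 * 1) := by positivity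
        have hT : D / Real.sqrt (D ^ 2 + 4 * 1 * 1) ≤ 1 := by
          rw [div_le_one (by positivity)]
          apply Real.le_sqrt_of_sq_le
          linarith
        have h6 : 1 - ε < 1 / (1 + ε) := by
          rw [lt_div_iff₀ (by linarith)]
          nlinarith
        have h7 : 0 < 1 / (1 + ε) := by positivity
        nlinarith
end

section
/- For every c > 0 and all x, y ∈ 𝔹ⁿ = {x ∈ ℝⁿ : |x| < 1} (n ≥ 2), the inequality min{1/(2c), 1/(1+c)}·T(x,y) ≤ |x−y|/(|x−y| + c(2 − |x| − |y|)) ≤ max{1, 1/c}·T(x,y) holds, where T(x,y) = |x−y|/√(|x−y|² + (1−|x|²)(1−|y|²)). -/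
theorem aux_low' (a b d : ℝ) (hb : 0 ≤ b) (hba : b ≤ a) (ha1 : a < 1)
    (h1 : a - b ≤ d) (h2 : d ≤ a + b) :
    (d + (2 - a - b)) ^ 2 ≤ 4 * (d ^ 2 + (1 - a ^ 2) * (1 - b ^ 2)) := by
  have ha : 0 ≤ a := hb.trans hba
  by_cases hA : 2 - a - b ≤ 3 * (a - b)
  · -- compare with d = a - b
    have e1 : 0 ≤ (d - (a - b)) * (3 * (d + (a - b)) - 2 * (2 - a - b)) :=
      mul_nonneg (by linarith) (by linarith)
    have e2 : (1 - b) ^ 2 ≤ (1 - a * b) ^ 2 := by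
      apply pow_le_pow_left₀ (by linarith)
      nlinarith
    nlinarith
  · push Not at hA
    by_cases hB : 2 - a - b ≤ 3 / 2
    · have e0 : 0 ≤ (2 * (1 - a) - (1 - b)) * (2 * (1 - b) - (1 - a)) :=
        mul_nonneg (by linarith) (by linarith)
      have e1 : 2 * (2 - a - b) ^ 2 ≤ 9 * ((1 - a) * (1 - b)) := by nlinarith
      have e4 : (3 / 2 : ℝ) ≤ (1 + a) * (1 + b) := by nlinarith
      have e5 : 0 ≤ (1 - a) * (1 - b) := mul_nonneg (by linarith) (by linarith)
      have e6 := mul_le_mul_of_nonneg_left e4 e5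
      nlinarith [sq_nonneg (3 * d - (2 - a - b))]
    · push Not at hB
      have e1 : 0 ≤ ((a + b) - d) * (2 * (2 - a - b) - 3 * (d + (a + b))) :=
        mul_nonneg (by linarith) (by linarith)
      have e2 : (0:ℝ) ≤ a * b := mul_nonneg ha hb
      nlinarith

theorem aux_low (a b d : ℝ) (ha : 0 ≤ a) (hb : 0 ≤ b) (ha1 : a < 1) (hb1 : b < 1)
    (h1 : a - b ≤ d) (h1' : b - a ≤ d) (h2 : d ≤ a + b) :
    (d + (2 - a - b)) ^ 2 ≤ 4 * (d ^ 2 + (1 - a ^ 2) * (1 - b ^ 2)) := by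
  rcases le_total b a with h | h
  · exact aux_low' a b d hb h ha1 h1 h2
  · have := aux_low' b a d ha h hb1 h1' (by linarith)
    nlinarith

theorem aux_up' (a b d : ℝ) (hb : 0 ≤ b) (hba : b ≤ a) (ha1 : a < 1)
    (h1 : a - b ≤ d) :
    d ^ 2 + (1 - a ^ 2) * (1 - b ^ 2) ≤ (d + (2 - a - b)) ^ 2 := by
  have e5 : 0 ≤ (1 - a) * (1 - b) := mul_nonneg (by linarith) (by linarith)
  have e4 : (1 + a) * (1 + b) ≤ 4 := by nlinarith
  have e6 := mul_le_mul_of_nonneg_left e4 e5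
  have e7 : 0 ≤ (d - (a - b)) * (2 - a - b) := mul_nonneg (by linarith) (by linarith)
  have e8 : 0 ≤ (3 * (1 - b) + (1 - a)) * (a - b) := mul_nonneg (by linarith) (by linarith)
  nlinarith

theorem aux_up (a b d : ℝ) (ha : 0 ≤ a) (hb : 0 ≤ b) (ha1 : a < 1) (hb1 : b < 1)
    (h1 : a - b ≤ d) (h1' : b - a ≤ d) :
    d ^ 2 + (1 - a ^ 2) * (1 - b ^ 2) ≤ (d + (2 - a - b)) ^ 2 := by
  rcases le_total b a with h | h
  · exact aux_up' a b d hb h ha1 h1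
  · have := aux_up' b a d ha h hb1 h1'
    nlinarith

theorem stmt13 (n : ℕ) (hn : 2 ≤ n) (c : ℝ) (hc : 0 < c)
    (x y : EuclideanSpace ℝ (Fin n)) (hx : ‖x‖ < 1) (hy : ‖y‖ < 1) :
    min (1 / (2 * c)) (1 / (1 + c)) *
        (dist x y / Real.sqrt (dist x y ^ 2 + (1 - ‖x‖ ^ 2) * (1 - ‖y‖ ^ 2))) ≤
      dist x y / (dist x y + c * (2 - ‖x‖ - ‖y‖)) ∧
    dist x y / (dist x y + c * (2 - ‖x‖ - ‖y‖)) ≤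
      max 1 (1 / c) *
        (dist x y / Real.sqrt (dist x y ^ 2 + (1 - ‖x‖ ^ 2) * (1 - ‖y‖ ^ 2))) := by
  have hd0 : 0 ≤ dist x y := dist_nonneg
  have h1 : ‖x‖ - ‖y‖ ≤ dist x y := by rw [dist_eq_norm]; exact norm_sub_norm_le x y
  have h1' : ‖y‖ - ‖x‖ ≤ dist x y := by
    rw [dist_comm, dist_eq_norm]; exact norm_sub_norm_le y x
  have h2 : dist x y ≤ ‖x‖ + ‖y‖ := by rw [dist_eq_norm]; exact norm_sub_le x y
  have ha := norm_nonneg x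
  have hb := norm_nonneg y
  generalize dist x y = d at *
  generalize ‖x‖ = a at *
  generalize ‖y‖ = b at *
  have hl := aux_low a b d ha hb hx hy h1 h1' h2
  have hu := aux_up a b d ha hb hx hy h1 h1'
  have hP : 0 < (1 - a ^ 2) * (1 - b ^ 2) := mul_pos (by nlinarith) (by nlinarith)
  have hs : 0 < 2 - a - b := by linarith
  have hS : 0 < Real.sqrt (d ^ 2 + (1 - a ^ 2) * (1 - b ^ 2)) := Real.sqrt_pos.2 (by positivity)
  have hdS : d ≤ Real.sqrt (d ^ 2 + (1 - a ^ 2) * (1 - b ^ 2)) :=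
    Real.le_sqrt_of_sq_le (by linarith)
  have hSu : Real.sqrt (d ^ 2 + (1 - a ^ 2) * (1 - b ^ 2)) ≤ d + (2 - a - b) :=
    Real.sqrt_le_iff.2 ⟨by linarith, hu⟩
  have hSl : (d + (2 - a - b)) / 2 ≤ Real.sqrt (d ^ 2 + (1 - a ^ 2) * (1 - b ^ 2)) :=
    Real.le_sqrt_of_sq_le (by linarith)
  generalize Real.sqrt (d ^ 2 + (1 - a ^ 2) * (1 - b ^ 2)) = S at *
  generalize 2 - a - b = s at *
  have hD : 0 < d + c * s := by positivity
  constructor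
  · have key : min (1 / (2 * c)) (1 / (1 + c)) * (d + c * s) ≤ S := by
      rcases le_total 1 c with h | h
      · refine (mul_le_mul_of_nonneg_right (min_le_left _ _) hD.le).trans ?_
        rw [one_div_mul_eq_div, div_le_iff₀ (by positivity)]
        nlinarith
      · refine (mul_le_mul_of_nonneg_right (min_le_right _ _) hD.le).trans ?_
        rw [one_div_mul_eq_div, div_le_iff₀ (by positivity)]
        nlinarith
    rw [← mul_div_assoc, div_le_div_iff₀ hS hD]
    nlinarith [mul_le_mul_of_nonneg_left key hd0]
  · have key : S ≤ max 1 (1 / c) * (d + c * s) := by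
      rcases le_total 1 c with h | h
      · refine le_trans ?_ (mul_le_mul_of_nonneg_right (le_max_left _ _) hD.le)
        nlinarith
      · refine le_trans ?_ (mul_le_mul_of_nonneg_right (le_max_right _ _) hD.le)
        rw [one_div_mul_eq_div, le_div_iff₀ (by positivity)]
        nlinarith
    rw [← mul_div_assoc, div_le_div_iff₀ hD hS]
    nlinarith [mul_le_mul_of_nonneg_left key hd0]
end

section
/- The constants in the two-sided comparison of φ̃ᶜ_{𝔹ⁿ} with T on the unit ball are sharp: for every c > 0 and every ε > 0 there exist distinct points x, y ∈ 𝔹ⁿ with |x−y|/(|x−y| + c(2 − |x| − |y|)) < (min{1/(2c), 1/(1+c)} + ε)·T(x,y), and there exist distinct points x', y' ∈ 𝔹ⁿ with |x'−y'|/(|x'−y'| + c(2 − |x'| − |y'|)) > (max{1, 1/c} − ε)·T(x',y'). -/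
open Filter Topology in
lemma near_zero (f : ℝ → ℝ) (hf : Continuous f) (h0 : 0 < f 0) :
    ∃ t : ℝ, 0 < t ∧ t < 1 / 2 ∧ 0 < f t := by
  have h1 : ∀ᶠ t in 𝓝[>] (0 : ℝ), 0 < f t :=
    (hf.continuousAt.eventually (lt_mem_nhds h0)).filter_mono nhdsWithin_le_nhds
  have h2 : ∀ᶠ t in 𝓝[>] (0 : ℝ), t ∈ Set.Ioo (0 : ℝ) (1 / 2) :=
    Ioo_mem_nhdsGT (by norm_num)
  obtain ⟨t, ht, ht'⟩ := (h1.and h2).exists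
  exact ⟨t, ht'.1, ht'.2, ht⟩

lemma line_facts (n : ℕ) (hn : 2 ≤ n) (a b : ℝ) (ha : |a| < 1) (hb : |b| < 1) (hab : a ≠ b) :
    ∃ x : EuclideanSpace ℝ (Fin n), ∃ y : EuclideanSpace ℝ (Fin n),
      ‖x‖ = |a| ∧ ‖y‖ = |b| ∧ x ≠ y ∧ dist x y = |a - b| ∧
      Real.sqrt (dist x y ^ 2 + (1 - ‖x‖ ^ 2) * (1 - ‖y‖ ^ 2)) = 1 - a * b ∧ 0 < 1 - a * b := by
  have hpos : 0 < 1 - a * b := by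
    rw [abs_lt] at ha hb
    nlinarith
  let e : EuclideanSpace ℝ (Fin n) := EuclideanSpace.single ⟨0, by omega⟩ 1
  have he : ‖e‖ = 1 := by simp [e]
  have hx : ‖a • e‖ = |a| := by rw [norm_smul, he, mul_one, Real.norm_eq_abs]
  have hy : ‖b • e‖ = |b| := by rw [norm_smul, he, mul_one, Real.norm_eq_abs]
  have hd : dist (a • e) (b • e) = |a - b| := by
    rw [dist_eq_norm, ← sub_smul, norm_smul, he, mul_one, Real.norm_eq_abs]
  refine ⟨a • e, b • e, hx, hy, ?_, hd, ?_, hpos⟩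
  · intro h
    rw [h, dist_self] at hd
    exact hab (sub_eq_zero.1 (abs_eq_zero.1 hd.symm))
  · rw [hd, hx, hy, sq_abs, sq_abs, sq_abs]
    rw [show (a - b) ^ 2 + (1 - a ^ 2) * (1 - b ^ 2) = (1 - a * b) ^ 2 by ring]
    exact Real.sqrt_sq hpos.le

lemma lower_pt (n : ℕ) (hn : 2 ≤ n) (c : ℝ) (hc : 0 < c) (K a b : ℝ) (ha : |a| < 1)
    (hb : |b| < 1) (hab : a ≠ b) (h : 1 - a * b < K * (|a - b| + c * (2 - |a| - |b|))) :
    ∃ x : EuclideanSpace ℝ (Fin n), ∃ y : EuclideanSpace ℝ (Fin n),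
      ‖x‖ < 1 ∧ ‖y‖ < 1 ∧ x ≠ y ∧
        dist x y / (dist x y + c * (2 - ‖x‖ - ‖y‖)) <
          K * (dist x y / Real.sqrt (dist x y ^ 2 + (1 - ‖x‖ ^ 2) * (1 - ‖y‖ ^ 2))) := by
  obtain ⟨x, y, hx, hy, hxy, hd, hs, hp⟩ := line_facts n hn a b ha hb hab
  refine ⟨x, y, hx ▸ ha, hy ▸ hb, hxy, ?_⟩
  rw [hs, hd, hx, hy]
  have hd0 : 0 < |a - b| := abs_pos.2 (sub_ne_zero.2 hab)
  have hD : 0 < |a - b| + c * (2 - |a| - |b|) := by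
    have := mul_pos hc (show 0 < 2 - |a| - |b| by linarith)
    linarith
  rw [← mul_div_assoc, div_lt_div_iff₀ hD hp]
  nlinarith [mul_lt_mul_of_pos_left h hd0]

lemma upper_pt (n : ℕ) (hn : 2 ≤ n) (c : ℝ) (hc : 0 < c) (K a b : ℝ) (ha : |a| < 1)
    (hb : |b| < 1) (hab : a ≠ b) (h : 1 - a * b > K * (|a - b| + c * (2 - |a| - |b|))) :
    ∃ x : EuclideanSpace ℝ (Fin n), ∃ y : EuclideanSpace ℝ (Fin n),
      ‖x‖ < 1 ∧ ‖y‖ < 1 ∧ x ≠ y ∧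
        dist x y / (dist x y + c * (2 - ‖x‖ - ‖y‖)) >
          K * (dist x y / Real.sqrt (dist x y ^ 2 + (1 - ‖x‖ ^ 2) * (1 - ‖y‖ ^ 2))) := by
  obtain ⟨x, y, hx, hy, hxy, hd, hs, hp⟩ := line_facts n hn a b ha hb hab
  refine ⟨x, y, hx ▸ ha, hy ▸ hb, hxy, ?_⟩
  rw [hs, hd, hx, hy]
  have hd0 : 0 < |a - b| := abs_pos.2 (sub_ne_zero.2 hab)
  have hD : 0 < |a - b| + c * (2 - |a| - |b|) := by
    have := mul_pos hc (show 0 < 2 - |a| - |b| by linarith)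
    linarith
  rw [gt_iff_lt, ← mul_div_assoc, div_lt_div_iff₀ hp hD]
  nlinarith [mul_lt_mul_of_pos_left h hd0]

theorem stmt14 (n : ℕ) (hn : 2 ≤ n) (c : ℝ) (hc : 0 < c) (ε : ℝ) (hε : 0 < ε) :
    (∃ x : EuclideanSpace ℝ (Fin n), ∃ y : EuclideanSpace ℝ (Fin n),
      ‖x‖ < 1 ∧ ‖y‖ < 1 ∧ x ≠ y ∧
        dist x y / (dist x y + c * (2 - ‖x‖ - ‖y‖)) <
          (min (1 / (2 * c)) (1 / (1 + c)) + ε) *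
            (dist x y / Real.sqrt (dist x y ^ 2 + (1 - ‖x‖ ^ 2) * (1 - ‖y‖ ^ 2)))) ∧
    (∃ x : EuclideanSpace ℝ (Fin n), ∃ y : EuclideanSpace ℝ (Fin n),
      ‖x‖ < 1 ∧ ‖y‖ < 1 ∧ x ≠ y ∧
        dist x y / (dist x y + c * (2 - ‖x‖ - ‖y‖)) >
          (max 1 (1 / c) - ε) *
            (dist x y / Real.sqrt (dist x y ^ 2 + (1 - ‖x‖ ^ 2) * (1 - ‖y‖ ^ 2)))) := by
  constructor
  · rcases min_choice (1 / (2 * c)) (1 / (1 + c)) with hm | hm <;> rw [hm]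
    · obtain ⟨t, h0, h1, ht⟩ := near_zero
        (fun t => (1 / (2 * c) + ε) * (t + c * (2 - t)) - 1) (by fun_prop) (by
          have h2 : (1 / (2 * c) + ε) * (0 + c * (2 - 0)) - 1 = 2 * c * ε := by
            field_simp
            ring
          simp only [h2]
          positivity)
      refine lower_pt n hn c hc _ 0 t (by simp) (by rw [abs_of_pos h0]; linarith) h0.ne ?_
      rw [zero_sub, abs_neg, abs_zero, abs_of_pos h0]
      simp only [sub_zero, zero_mul]
      linarith
    · obtain ⟨t, h0, h1, ht⟩ := near_zero
        (fun t => (1 / (1 + c) + ε) * ((1 - t) + c * (2 - (1 - t))) - 1) (by fun_prop) (by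
          have h2 : (1 / (1 + c) + ε) * ((1 - 0) + c * (2 - (1 - 0))) - 1 = (1 + c) * ε := by
            field_simp
            ring
          simp only [h2]
          positivity)
      have h3 : 0 < 1 - t := by linarith
      refine lower_pt n hn c hc _ 0 (1 - t) (by simp) (by rw [abs_of_pos h3]; linarith) h3.ne ?_
      rw [zero_sub, abs_neg, abs_zero, abs_of_pos h3]
      simp only [sub_zero, zero_mul]
      linarith
  · rcases max_choice 1 (1 / c) with hm | hm <;> rw [hm]
    · obtain ⟨t, h0, h1, ht⟩ := near_zero
        (fun t => 1 + (1 - t) ^ 2 - (1 - ε) * (2 * (1 - t) + c * (2 * t))) (by fun_prop) (by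
          norm_num
          linarith)
      have h3 : 0 < 1 - t := by linarith
      refine upper_pt n hn c hc _ (1 - t) (-(1 - t)) (by rw [abs_of_pos h3]; linarith)
        (by rw [abs_neg, abs_of_pos h3]; linarith) (by linarith) ?_
      rw [abs_neg, abs_of_pos h3, sub_neg_eq_add, abs_of_pos (by linarith)]
      ring_nf at ht ⊢
      linarith
    · obtain ⟨t, h0, h1, ht⟩ := near_zero
        (fun t => 2 - t ^ 2 - (1 / c - ε) * (t + c * (2 + t))) (by fun_prop) (by
          have h2 : 2 - 0 ^ 2 - (1 / c - ε) * (0 + c * (2 + 0)) = 2 * c * ε := by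
            field_simp
            ring
          simp only [h2]
          positivity)
      have h4 : t ^ 2 < 1 / 4 := by nlinarith
      have h5 : 0 < t ^ 2 := by positivity
      have h3 : 0 < 1 - t := by linarith
      have h6 : 0 < 1 - t - t ^ 2 := by linarith
      refine upper_pt n hn c hc _ (1 - t) (1 - t - t ^ 2) (by rw [abs_of_pos h3]; linarith)
        (by rw [abs_of_pos h6]; linarith) (by linarith) ?_
      rw [abs_of_pos h3, abs_of_pos h6, abs_of_pos (by linarith)]
      have h7 := mul_pos h0 ht
      have h8 : 1 - (1 - t) * (1 - t - t ^ 2) - (1 / c - ε) * ((1 - t - (1 - t - t ^ 2)) +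
          c * (2 - (1 - t) - (1 - t - t ^ 2))) =
          t * (2 - t ^ 2 - (1 / c - ε) * (t + c * (2 + t))) := by ring
      linarith
end

section
/- The upper constant max{1, 1/c} in the comparison of the logarithmic-mean function with T on the upper half-space is sharp: for every c > 0 and every ε > 0 there exist distinct points x, y ∈ ℍⁿ such that |x−y|/(|x−y| + 2c·L(xₙ, yₙ)) > (max{1, 1/c} − ε)·T(x,y). -/
theorem aux17 (c : ℝ) (hc : 0 < c) (ε : ℝ) (hε : 0 < ε) :
    ∃ d : ℝ, 0 < d ∧ (max 1 (1 / c) - ε) * (d + 2 * c) < Real.sqrt (d ^ 2 + 4) := by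
  rcases le_total 1 c with h | h
  · refine ⟨2 * c / ε, by positivity, ?_⟩
    rw [max_eq_left (by rw [div_le_one hc]; exact h)]
    have h1 : 2 * c / ε < Real.sqrt ((2 * c / ε) ^ 2 + 4) :=
      Real.lt_sqrt_of_sq_lt (by linarith)
    have h2 : (1 - ε) * (2 * c / ε + 2 * c) = 2 * c / ε - 2 * c * ε := by
      field_simp
      ring
    have h3 : 0 < 2 * c * ε := by positivity
    linarith
  · refine ⟨2 * c ^ 2 * ε, by positivity, ?_⟩
    rw [max_eq_right (by rw [le_div_iff₀ hc]; linarith)]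
    have h0 : 0 < (2 * c ^ 2 * ε) ^ 2 := by positivity
    have h1 : 2 < Real.sqrt ((2 * c ^ 2 * ε) ^ 2 + 4) :=
      Real.lt_sqrt_of_sq_lt (by linarith)
    have h2 : (1 / c - ε) * (2 * c ^ 2 * ε + 2 * c) = 2 - 2 * (c * ε) ^ 2 := by
      field_simp
      ring
    have h3 : 0 < (c * ε) ^ 2 := by positivity
    linarith

theorem stmt17 (n : ℕ) (hn : 2 ≤ n) (c : ℝ) (hc : 0 < c) (ε : ℝ) (hε : 0 < ε) :
    ∃ x ∈ {p : EuclideanSpace ℝ (Fin n) | 0 < p ⟨n - 1, by omega⟩},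
      ∃ y ∈ {p : EuclideanSpace ℝ (Fin n) | 0 < p ⟨n - 1, by omega⟩}, x ≠ y ∧
        dist x y / (dist x y + 2 * c * logMean (x ⟨n - 1, by omega⟩) (y ⟨n - 1, by omega⟩)) >
          (max 1 (1 / c) - ε) *
            (dist x y /
              Real.sqrt (dist x y ^ 2 + 4 * x ⟨n - 1, by omega⟩ * y ⟨n - 1, by omega⟩)) := by
  obtain ⟨d, hd, h⟩ := aux17 c hc ε hε
  have hne : (⟨n - 1, by omega⟩ : Fin n) ≠ ⟨0, by omega⟩ := by
    intro h; rw [Fin.mk.injEq] at h; omega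
  set e : EuclideanSpace ℝ (Fin n) := EuclideanSpace.single ⟨n - 1, by omega⟩ 1 with he
  set f : EuclideanSpace ℝ (Fin n) := EuclideanSpace.single ⟨0, by omega⟩ d with hf
  have h1 : e ⟨n - 1, by omega⟩ = 1 := by simp [he]
  have h2 : (e + f) ⟨n - 1, by omega⟩ = 1 := by
    rw [PiLp.add_apply, h1, hf]; simp [hne]
  have hdist : dist e (e + f) = d := by
    rw [dist_self_add_right, hf, EuclideanSpace.norm_single, Real.norm_of_nonneg hd.le]
  refine ⟨e, by simp only [Set.mem_setOf_eq, h1]; norm_num, e + f,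
    by simp only [Set.mem_setOf_eq, h2]; norm_num, ?_, ?_⟩
  · rw [← dist_pos, hdist]; exact hd
  · rw [hdist, h1, h2]
    have hs : 0 < Real.sqrt (d ^ 2 + 4) := by positivity
    have : logMean 1 1 = 1 := by simp [logMean]
    rw [this, mul_one, mul_one, mul_one, gt_iff_lt, ← mul_div_assoc,
      div_lt_div_iff₀ hs (by positivity)]
    nlinarith
end

section
/- The upper constant max{1, 1/c} in the comparison of the logarithmic-mean function with T on the unit ball is sharp: for every c > 0 and every ε > 0 there exist distinct points x, y ∈ 𝔹ⁿ such that |x−y|/(|x−y| + 2c·L(1−|x|, 1−|y|)) > (max{1, 1/c} − ε)·T(x,y). -/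
theorem exists_pts (n : ℕ) (hn : 2 ≤ n) (r b : ℝ) (hb : 0 < b) (hbr : b ≤ r) :
    ∃ x y : EuclideanSpace ℝ (Fin n), ‖x‖ = r ∧ ‖y‖ = r ∧ dist x y = 2 * b := by
  have hr : 0 < r := lt_of_lt_of_le hb hbr
  let i : Fin n := ⟨0, by omega⟩
  let j : Fin n := ⟨1, by omega⟩
  have hij : i ≠ j := by simp [i, j]
  have hab : Real.sqrt (r ^ 2 - b ^ 2) ^ 2 = r ^ 2 - b ^ 2 := Real.sq_sqrt (by nlinarith)
  set a := Real.sqrt (r ^ 2 - b ^ 2)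
  have hin : inner ℝ (EuclideanSpace.single i a) (EuclideanSpace.single j b) = 0 := by
    simp [EuclideanSpace.inner_single_left, hij]
  refine ⟨EuclideanSpace.single i a + EuclideanSpace.single j b,
    EuclideanSpace.single i a - EuclideanSpace.single j b, ?_, ?_, ?_⟩
  · rw [← sq_eq_sq₀ (norm_nonneg _) hr.le, norm_add_sq_real, hin]
    simp [hab]
  · rw [← sq_eq_sq₀ (norm_nonneg _) hr.le, norm_sub_sq_real, hin]
    simp [hab]
  · rw [dist_eq_norm]
    have : EuclideanSpace.single i a + EuclideanSpace.single j b -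
      (EuclideanSpace.single i a - EuclideanSpace.single j b)
        = (2 : ℝ) • (EuclideanSpace.single j b : EuclideanSpace ℝ (Fin n)) := by
      rw [two_smul]; abel
    rw [this, norm_smul]
    simp [abs_of_pos hb]

theorem reduce (n : ℕ) (hn : 2 ≤ n) (c : ℝ) (hc : 0 < c) (K r b : ℝ) (hb : 0 < b) (hbr : b ≤ r)
    (hr : r < 1)
    (h : K * (2 * b + 2 * c * (1 - r)) < Real.sqrt ((2 * b) ^ 2 + (1 - r ^ 2) * (1 - r ^ 2))) :
    ∃ x : EuclideanSpace ℝ (Fin n), ∃ y : EuclideanSpace ℝ (Fin n),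
      ‖x‖ < 1 ∧ ‖y‖ < 1 ∧ x ≠ y ∧
        dist x y / (dist x y + 2 * c * logMean (1 - ‖x‖) (1 - ‖y‖)) >
          K * (dist x y / Real.sqrt (dist x y ^ 2 + (1 - ‖x‖ ^ 2) * (1 - ‖y‖ ^ 2))) := by
  obtain ⟨x, y, hx, hy, hd⟩ := exists_pts n hn r b hb hbr
  refine ⟨x, y, by rwa [hx], by rwa [hy], ?_, ?_⟩
  · rw [← dist_pos, hd]; positivity
  · have hs : 0 < Real.sqrt ((2 * b) ^ 2 + (1 - r ^ 2) * (1 - r ^ 2)) :=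
      Real.sqrt_pos.mpr (by nlinarith [mul_self_nonneg (1 - r ^ 2)])
    rw [hx, hy, hd, logMean, if_pos rfl, gt_iff_lt, mul_div_assoc', div_lt_div_iff₀ hs (by
      have : 0 < c * (1 - r) := mul_pos hc (by linarith)
      linarith)]
    nlinarith

theorem stmt19 (n : ℕ) (hn : 2 ≤ n) (c : ℝ) (hc : 0 < c) (ε : ℝ) (hε : 0 < ε) :
    ∃ x : EuclideanSpace ℝ (Fin n), ∃ y : EuclideanSpace ℝ (Fin n),
      ‖x‖ < 1 ∧ ‖y‖ < 1 ∧ x ≠ y ∧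
        dist x y / (dist x y + 2 * c * logMean (1 - ‖x‖) (1 - ‖y‖)) >
          (max 1 (1 / c) - ε) *
            (dist x y / Real.sqrt (dist x y ^ 2 + (1 - ‖x‖ ^ 2) * (1 - ‖y‖ ^ 2))) := by
  rcases le_total (1 / c) 1 with h | h
  · rw [max_eq_left h]
    obtain ⟨s, hs⟩ : ∃ s, s = ε / (2 * (c + ε)) := ⟨_, rfl⟩
    have hs0 : 0 < s := by rw [hs]; positivity
    have hs1 : s * (c + ε) = ε / 2 := by rw [hs]; field_simp
    have hs2 : s ≤ 1 / 2 := by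
      rw [hs, div_le_div_iff₀ (by positivity) (by norm_num)]; linarith
    apply reduce n hn c hc (1 - ε) (1 - s) (1 - s) (by linarith) le_rfl (by linarith)
    have h1 : 2 * (1 - s) ≤
        Real.sqrt ((2 * (1 - s)) ^ 2 + (1 - (1 - s) ^ 2) * (1 - (1 - s) ^ 2)) := by
      apply Real.le_sqrt_of_sq_le
      nlinarith [mul_self_nonneg (1 - (1 - s) ^ 2)]
    refine lt_of_lt_of_le ?_ h1
    have : 0 < ε * (c * s) := by positivity
    nlinarith
  · rw [max_eq_right h]
    obtain ⟨s, hs⟩ : ∃ s, s = min (c * ε / 2) (1 / 2) := ⟨_, rfl⟩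
    obtain ⟨t, ht⟩ : ∃ t, t = min (c ^ 2 * ε / 4) 1 := ⟨_, rfl⟩
    have hs0 : 0 < s := by rw [hs]; positivity
    have ht0 : 0 < t := by rw [ht]; positivity
    have hs1 : s ≤ c * ε / 2 := by rw [hs]; exact min_le_left _ _
    have hs2 : s ≤ 1 / 2 := by rw [hs]; exact min_le_right _ _
    have ht1 : t ≤ c ^ 2 * ε / 4 := by rw [ht]; exact min_le_left _ _
    have ht2 : t ≤ 1 := by rw [ht]; exact min_le_right _ _
    apply reduce n hn c hc (1 / c - ε) (1 - s) (t * s) (by positivity) (by nlinarith) (by linarith)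
    have h1 : s * (2 - s) ≤
        Real.sqrt ((2 * (t * s)) ^ 2 + (1 - (1 - s) ^ 2) * (1 - (1 - s) ^ 2)) := by
      apply Real.le_sqrt_of_sq_le
      nlinarith [sq_nonneg (2 * (t * s))]
    refine lt_of_lt_of_le ?_ h1
    have h2 : t / c ≤ c * ε / 4 := by
      rw [div_le_iff₀ hc]; nlinarith
    have h3 : (1 / c - ε) * (2 * (t * s) + 2 * c * (1 - (1 - s)))
        = s * (2 - 2 * c * ε + 2 * (t / c) - 2 * (t * ε)) := by
      field_simp; ring
    rw [h3]
    apply mul_lt_mul_of_pos_left _ hs0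
    have : 0 < t * ε := by positivity
    have : 0 < c * ε := by positivity
    linarith
end
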